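/- Let Ω ⊂ ℝ² be a bounded open set every vertical section and every horizontal section of which is an interval. There exist C > 0 and ε₀ > 0, depending only on Ω and on a fixed point p ∈ Ω, with the following property. Let ε ∈ (0, ε₀), let K ⊂ B̄_ε be a compact set of Lebesgue measure zero such that Ω ∖ K satisfies property* (for every (x₀,y₀) ∈ Ω ∖ K, either the vertical line through (x₀,y₀) does not intersect K or the horizontal line through (x₀,y₀) does not intersect K), and suppose B̄_{2ε} ⊂ Ω. Then for every continuously differentiable u on Ω ∖ K with ‖u‖₁² := ∫_{Ω∖K} (|∇u|² + |u|²) dx dy < ∞ there exists ϵ ∈ (ε, 2ε) such that, with v defined by v := u on Ω ∖ B_ϵ and v(r cos φ, r sin φ) := (r/ϵ) u(ϵ cos φ, ϵ sin φ) for 0 ≤ r < ϵ, every function f that is twice continuously differentiable on Ω with f, |∇f|, Δf square-integrable on Ω and Re ∫_Ω (Δf)·conj(f) dx dy ≤ 0 satisfies |∫_{Ω∖K} ∇f · conj(∇v − ∇u) dx dy| ≤ C ε^{1/6} ( ∫_Ω |−Δf + f|² dx dy )^{1/2} · ‖u‖₁. -/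

import Mathlib

open MeasureTheory Real Set

noncomputable section

abbrev E2 : Type := EuclideanSpace ℝ (Fin 2)

/-- The point `(x, y)` in the Euclidean plane. -/
def pt (x y : ℝ) : E2 := !₂[x, y]

/-- The `i`-th partial derivative of `f : ℝ² → ℂ`. -/
def pd (i : Fin 2) (f : E2 → ℂ) (p : E2) : ℂ :=
  fderiv ℝ f p (EuclideanSpace.single i 1)

/-- `|∇f|²` at `p`, i.e. `|∂f/∂x|² + |∂f/∂y|²`. -/
def gradSq (f : E2 → ℂ) (p : E2) : ℝ :=
  ‖pd 0 f p‖ ^ 2 + ‖pd 1 f p‖ ^ 2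

/-- The Laplacian `Δf` at `p`. -/
def lap (f : E2 → ℂ) (p : E2) : ℂ :=
  pd 0 (pd 0 f) p + pd 1 (pd 1 f) p

/-- The point `(τ cos φ, τ sin φ)` on the circle of radius `τ`. -/
def circ (τ φ : ℝ) : E2 := pt (τ * Real.cos φ) (τ * Real.sin φ)

/-!
Since `∇v = ∇u` outside the closed disc of radius `ϵ`, Cauchy–Schwarz controls the form by the
energy of `f` on `B_ϵ` and the energies of `u` and `v`.

The gradient of `f` is small on a small disc: for a cut-off `h` of `f`, `∫ |D²h|² = ∫ |Δh|²`, so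
`∇h` lies in `L⁴` by Sobolev, and Hölder yields `∫_{B_ϵ} |∇f|² ≲ ϵ (‖f‖² + ‖Δf‖²)`. The sign
condition `Re ∫ Δf · conj f ≤ 0` bounds `‖f‖² + ‖Δf‖²` by `‖-Δf + f‖²`.

The energy of `v` in `B_ϵ` is read off the values of `u` and `∇u` on the circle of radius `ϵ`.
Averaging over `(ε, 2ε)` finds a circle on which `∇u` is controlled; integrating `∂u/∂r` outwards
against the weight `r dr` controls the trace of `u` there at the cost of a factor `log (1 / ε)`.
Altogether the form is `O(√(ε log (1 / ε)))`, hence `O(ε^s)` for every `s < 1/2`.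
-/

open Filter Metric
open scoped ENNReal NNReal Topology ComplexConjugate Convolution

/-! ### Partial derivatives, gradient and Laplacian -/

section PartialDerivatives

variable {f a b : E2 → ℂ} {q : E2} {m n : WithTop ℕ∞}

theorem contDiff_pd (hf : ContDiff ℝ n f) (hmn : m + 1 ≤ n) (i : Fin 2) :
    ContDiff ℝ m (pd i f) :=
  (hf.fderiv_right hmn).clm_apply contDiff_const

theorem contDiff_one_pd (hf : ContDiff ℝ 2 f) (i : Fin 2) : ContDiff ℝ 1 (pd i f) :=
  contDiff_pd hf one_add_one_eq_two.le i

theorem continuous_pd (hf : ContDiff ℝ 1 f) (i : Fin 2) : Continuous (pd i f) :=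
  (contDiff_pd (m := 0) hf (zero_add 1).le i).continuous

theorem continuous_gradSq (hf : ContDiff ℝ 1 f) : Continuous (gradSq f) :=
  ((continuous_pd hf 0).norm.pow 2).add ((continuous_pd hf 1).norm.pow 2)

theorem continuous_lap (hf : ContDiff ℝ 2 f) : Continuous (lap f) :=
  (continuous_pd (contDiff_one_pd hf 0) 0).add (continuous_pd (contDiff_one_pd hf 1) 1)

theorem measurable_pd (f : E2 → ℂ) (i : Fin 2) : Measurable (pd i f) :=
  measurable_fderiv_apply_const ℝ f _

theorem measurable_gradSq (f : E2 → ℂ) : Measurable (gradSq f) :=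
  ((measurable_pd f 0).norm.pow_const 2).add ((measurable_pd f 1).norm.pow_const 2)

theorem measurable_lap (f : E2 → ℂ) : Measurable (lap f) :=
  (measurable_pd _ 0).add (measurable_pd _ 1)

theorem gradSq_nonneg (f : E2 → ℂ) (q : E2) : 0 ≤ gradSq f q := by
  unfold gradSq
  positivity

theorem pd_eventuallyEq (h : a =ᶠ[𝓝 q] b) (i : Fin 2) : pd i a =ᶠ[𝓝 q] pd i b := by
  filter_upwards [h.fderiv (𝕜 := ℝ)] with x hx
  rw [pd, pd, hx]

theorem gradSq_congr (h : a =ᶠ[𝓝 q] b) : gradSq a q = gradSq b q := by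
  rw [gradSq, gradSq, (pd_eventuallyEq h 0).eq_of_nhds, (pd_eventuallyEq h 1).eq_of_nhds]

theorem lap_congr (h : a =ᶠ[𝓝 q] b) : lap a q = lap b q := by
  have pd_pd_eq (i : Fin 2) := (pd_eventuallyEq (pd_eventuallyEq h i) i).eq_of_nhds
  rw [lap, lap, pd_pd_eq, pd_pd_eq]

theorem support_pd_subset (i : Fin 2) : Function.support (pd i f) ⊆ tsupport f := by
  refine fun q hq ↦ support_fderiv_subset ℝ fun h ↦ hq ?_
  rw [pd, h, zero_apply]

theorem support_lap_subset : Function.support (lap f) ⊆ tsupport f := by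
  have support_pd_pd (i : Fin 2) : Function.support (pd i (pd i f)) ⊆ tsupport f :=
    (support_pd_subset i).trans (closure_minimal (support_pd_subset i) (isClosed_tsupport f))
  exact (Function.support_add _ _).trans (union_subset (support_pd_pd 0) (support_pd_pd 1))

theorem hasCompactSupport_pd (hf : HasCompactSupport f) (i : Fin 2) :
    HasCompactSupport (pd i f) :=
  hf.mono' (support_pd_subset i)

theorem hasCompactSupport_lap (hf : HasCompactSupport f) : HasCompactSupport (lap f) :=
  hf.mono' support_lap_subset

theorem pd_add (ha : DifferentiableAt ℝ a q) (hb : DifferentiableAt ℝ b q) (i : Fin 2) :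
    pd i (fun x ↦ a x + b x) q = pd i a q + pd i b q := by
  rw [pd, fderiv_fun_add ha hb, add_apply, pd, pd]

theorem pd_mul (ha : DifferentiableAt ℝ a q) (hb : DifferentiableAt ℝ b q) (i : Fin 2) :
    pd i (fun x ↦ a x * b x) q = pd i a q * b q + a q * pd i b q := by
  simp only [pd, fderiv_fun_mul ha hb, add_apply, smul_apply, smul_eq_mul]
  ring

theorem pd_conj (i : Fin 2) (q : E2) : pd i (fun x ↦ conj (a x)) q = conj (pd i a q) :=
  congr($(Complex.conjCLE.comp_fderiv (f := a) (x := q)) (EuclideanSpace.single i 1))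

theorem contDiff_conj (ha : ContDiff ℝ n a) : ContDiff ℝ n (fun x ↦ conj (a x)) :=
  Complex.conjCLE.contDiff.comp ha

theorem pd_pd_eq_fderiv_fderiv (hf : ContDiff ℝ 2 f) (i j : Fin 2) (q : E2) :
    pd i (pd j f) q
      = fderiv ℝ (fderiv ℝ f) q (EuclideanSpace.single i 1) (EuclideanSpace.single j 1) := by
  have hd : DifferentiableAt ℝ (fderiv ℝ f) q :=
    (hf.fderiv_right one_add_one_eq_two.le).differentiable one_ne_zero q
  unfold pd
  rw [fderiv_clm_apply hd (differentiableAt_const _)]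
  simp

theorem pd_comm (hf : ContDiff ℝ 2 f) (i j : Fin 2) (q : E2) :
    pd i (pd j f) q = pd j (pd i f) q := by
  rw [pd_pd_eq_fderiv_fderiv hf, pd_pd_eq_fderiv_fderiv hf]
  exact hf.contDiffAt.isSymmSndFDerivAt (by simp) _ _

theorem pd_pd_mul (ha : ContDiff ℝ 2 a) (hb : ContDiff ℝ 2 b) (i : Fin 2) (q : E2) :
    pd i (pd i fun x ↦ a x * b x) q
      = pd i (pd i a) q * b q + a q * pd i (pd i b) q + 2 * (pd i a q * pd i b q) := by
  have da := ha.differentiable two_ne_zero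
  have db := hb.differentiable two_ne_zero
  have dpa := (contDiff_one_pd ha i).differentiable one_ne_zero
  have dpb := (contDiff_one_pd hb i).differentiable one_ne_zero
  have first : pd i (fun x ↦ a x * b x) = fun x ↦ pd i a x * b x + a x * pd i b x :=
    funext fun x ↦ pd_mul (da x) (db x) i
  rw [first, pd_add ((dpa q).fun_mul (db q)) ((da q).fun_mul (dpb q)), pd_mul (dpa q) (db q),
    pd_mul (da q) (dpb q)]
  ring

theorem lap_mul (ha : ContDiff ℝ 2 a) (hb : ContDiff ℝ 2 b) (q : E2) :
    lap (fun x ↦ a x * b x) q = lap a q * b q + a q * lap b q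
      + 2 * (pd 0 a q * pd 0 b q + pd 1 a q * pd 1 b q) := by
  rw [lap, pd_pd_mul ha hb, pd_pd_mul ha hb, lap, lap]
  ring

theorem lap_conj (q : E2) : lap (fun x ↦ conj (a x)) q = conj (lap a q) := by
  have pd_conj' (i : Fin 2) : pd i (fun x ↦ conj (a x)) = fun x ↦ conj (pd i a x) :=
    funext (pd_conj i)
  rw [lap, pd_conj', pd_conj', pd_conj, pd_conj, lap, map_add]

theorem re_lap_mul_conj_self (hf : ContDiff ℝ 2 f) (q : E2) :
    (lap (fun x ↦ f x * conj (f x)) q).re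
      = 2 * gradSq f q + 2 * (lap f q * conj (f q)).re := by
  have re_conj_swap : (f q * conj (lap f q)).re = (lap f q * conj (f q)).re := by
    rw [← Complex.conj_re, map_mul, Complex.conj_conj, mul_comm]
  have re_grad : (2 * (pd 0 f q * conj (pd 0 f q) + pd 1 f q * conj (pd 1 f q))).re
      = 2 * gradSq f q := by
    rw [Complex.mul_conj', Complex.mul_conj', gradSq]
    norm_cast
  rw [lap_mul hf (contDiff_conj hf), lap_conj, pd_conj, pd_conj, Complex.add_re, Complex.add_re,
    re_grad, re_conj_swap]
  ring

theorem fderiv_apply_eq (f : E2 → ℂ) (q w : E2) :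
    fderiv ℝ f q w = w 0 • pd 0 f q + w 1 • pd 1 f q := by
  have hw : w = w 0 • EuclideanSpace.single 0 1 + w 1 • EuclideanSpace.single 1 1 := by
    ext i
    fin_cases i <;> simp
  conv_lhs => rw [hw]
  simp only [map_add, map_smul, pd]

theorem norm_fderiv_apply_sq_le (f : E2 → ℂ) (q w : E2) :
    ‖fderiv ℝ f q w‖ ^ 2 ≤ gradSq f q * ‖w‖ ^ 2 := by
  calc ‖fderiv ℝ f q w‖ ^ 2
      ≤ (|w 0| * ‖pd 0 f q‖ + |w 1| * ‖pd 1 f q‖) ^ 2 := by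
        gcongr
        rw [fderiv_apply_eq]
        exact (norm_add_le _ _).trans_eq (by simp)
    _ ≤ gradSq f q * (|w 0| ^ 2 + |w 1| ^ 2) := by
        rw [gradSq]
        nlinarith [sq_nonneg (|w 0| * ‖pd 1 f q‖ - |w 1| * ‖pd 0 f q‖)]
    _ = gradSq f q * ‖w‖ ^ 2 := by simp [EuclideanSpace.norm_sq_eq]

theorem norm_fderiv_sq_le_gradSq (f : E2 → ℂ) (q : E2) : ‖fderiv ℝ f q‖ ^ 2 ≤ gradSq f q := by
  refine (Real.le_sqrt (norm_nonneg _) (gradSq_nonneg f q)).1 ?_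
  refine ContinuousLinearMap.opNorm_le_bound _ (Real.sqrt_nonneg _) fun w ↦ ?_
  refine (sq_le_sq₀ (norm_nonneg _) (by positivity)).1 ?_
  rw [mul_pow, Real.sq_sqrt (gradSq_nonneg f q)]
  exact norm_fderiv_apply_sq_le f q w

theorem norm_pd_le_norm_fderiv (f : E2 → ℂ) (i : Fin 2) (q : E2) : ‖pd i f q‖ ≤ ‖fderiv ℝ f q‖ :=
  ContinuousLinearMap.unit_le_opNorm _ _ (by simp)

theorem gradSq_le_two_mul_norm_fderiv_sq (f : E2 → ℂ) (q : E2) :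
    gradSq f q ≤ 2 * ‖fderiv ℝ f q‖ ^ 2 := by
  rw [gradSq, two_mul]
  gcongr <;> exact norm_pd_le_norm_fderiv f _ q

end PartialDerivatives

/-! ### Integration by parts and the Hessian -/

section MixedDerivatives

variable {E : Type*} [NormedAddCommGroup E] [NormedSpace ℝ E] [FiniteDimensional ℝ E]
  [MeasurableSpace E] [BorelSpace E] {μ : Measure E} [μ.IsAddHaarMeasure]
  {𝕜 : Type*} [RCLike 𝕜] {a b : E → 𝕜}

theorem fderiv_convolution_right_apply (ha : Continuous a) (hb : ContDiff ℝ 1 b)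
    (hbc : HasCompactSupport b) (x v : E) :
    fderiv ℝ (a ⋆[ContinuousLinearMap.mul ℝ 𝕜, μ] b) x v
      = (a ⋆[ContinuousLinearMap.mul ℝ 𝕜, μ] fun y ↦ fderiv ℝ b y v) x := by
  have hint := (hbc.fderiv ℝ).convolutionExists_right
    ((ContinuousLinearMap.mul ℝ 𝕜).precompR E) (μ := μ) ha.locallyIntegrable
    (hb.continuous_fderiv one_ne_zero) x
  rw [(hbc.hasFDerivAt_convolution_right (ContinuousLinearMap.mul ℝ 𝕜)
    ha.locallyIntegrable hb x).fderiv, convolution_def, ContinuousLinearMap.integral_apply hint]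
  rfl

theorem fderiv_convolution_left_apply (ha : ContDiff ℝ 1 a) (hac : HasCompactSupport a)
    (hb : Continuous b) (x v : E) :
    fderiv ℝ (a ⋆[ContinuousLinearMap.mul ℝ 𝕜, μ] b) x v
      = ((fun y ↦ fderiv ℝ a y v) ⋆[ContinuousLinearMap.mul ℝ 𝕜, μ] b) x := by
  have convolution_comm (g h : E → 𝕜) : g ⋆[ContinuousLinearMap.mul ℝ 𝕜, μ] h
      = h ⋆[ContinuousLinearMap.mul ℝ 𝕜, μ] g := by
    rw [← convolution_flip, ContinuousLinearMap.flip_mul]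
  rw [convolution_comm, convolution_comm _ b, fderiv_convolution_right_apply hb ha hac]

/-- Both sides are, up to sign, a mixed second derivative of `a ⋆ b(-·)` at the origin; this is
why no second derivatives of `a` or `b` are required. -/
theorem integral_fderiv_mul_fderiv_comm (ha : ContDiff ℝ 1 a) (hb : ContDiff ℝ 1 b)
    (hac : HasCompactSupport a) (hbc : HasCompactSupport b) (v w : E) :
    ∫ x, fderiv ℝ a x v * fderiv ℝ b x w ∂μ = ∫ x, fderiv ℝ a x w * fderiv ℝ b x v ∂μ := by
  let c : E → 𝕜 := fun x ↦ b (-x)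
  have hc : ContDiff ℝ 1 c := hb.comp contDiff_neg
  have hcc : HasCompactSupport c := hbc.comp_homeomorph (Homeomorph.neg E)
  have fderiv_c (x v : E) : fderiv ℝ c (-x) v = -fderiv ℝ b x v := by
    have := (ContinuousLinearEquiv.neg ℝ (M := E)).comp_right_fderiv (f := b) (x := -x)
    simpa [Function.comp_def] using congr($this v)
  have move_derivative : (a ⋆[ContinuousLinearMap.mul ℝ 𝕜, μ] fun y ↦ fderiv ℝ c y w)
      = (fun y ↦ fderiv ℝ a y w) ⋆[ContinuousLinearMap.mul ℝ 𝕜, μ] c := by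
    ext x
    rw [← fderiv_convolution_right_apply ha.continuous hc hcc,
      fderiv_convolution_left_apply ha hac hc.continuous]
  have mixed := congr(fderiv ℝ $move_derivative 0 v)
  rw [fderiv_convolution_left_apply ha hac
      ((hc.continuous_fderiv one_ne_zero).clm_apply continuous_const),
    fderiv_convolution_right_apply
      ((ha.continuous_fderiv one_ne_zero).clm_apply continuous_const) hc hcc] at mixed
  simpa [convolution_def, fderiv_c, integral_neg] using mixed

end MixedDerivatives

section IntegrationByParts

variable {f h a b : E2 → ℂ}

theorem integral_mul_pd (ha : ContDiff ℝ 1 a) (hb : ContDiff ℝ 1 b) (hac : HasCompactSupport a)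
    (i : Fin 2) : ∫ q, a q * pd i b q = -∫ q, pd i a q * b q := by
  refine integral_mul_fderiv_eq_neg_fderiv_mul_of_integrable ?_ ?_ ?_
    (fun x _ ↦ ha.differentiable one_ne_zero x) (fun x _ ↦ hb.differentiable one_ne_zero x)
  · exact ((continuous_pd ha i).mul hb.continuous).integrable_of_hasCompactSupport
      (hasCompactSupport_pd hac i).mul_right
  · exact (ha.continuous.mul (continuous_pd hb i)).integrable_of_hasCompactSupport hac.mul_right
  · exact (ha.continuous.mul hb.continuous).integrable_of_hasCompactSupport hac.mul_right

theorem integral_mul_lap (ha : ContDiff ℝ 2 a) (hb : ContDiff ℝ 2 b) (hac : HasCompactSupport a) :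
    ∫ q, a q * lap b q = ∫ q, lap a q * b q := by
  have integral_mul_pd_pd (i : Fin 2) :
      ∫ q, a q * pd i (pd i b) q = ∫ q, pd i (pd i a) q * b q := by
    rw [integral_mul_pd (ha.of_le one_le_two) (contDiff_one_pd hb i) hac,
      integral_mul_pd (contDiff_one_pd ha i) (hb.of_le one_le_two) (hasCompactSupport_pd hac i),
      neg_neg]
  have left_integrable (i : Fin 2) : Integrable fun q ↦ a q * pd i (pd i b) q :=
    (ha.continuous.mul
      (continuous_pd (contDiff_one_pd hb i) i)).integrable_of_hasCompactSupport hac.mul_right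
  have right_integrable (i : Fin 2) : Integrable fun q ↦ pd i (pd i a) q * b q :=
    ((continuous_pd (contDiff_one_pd ha i) i).mul hb.continuous).integrable_of_hasCompactSupport
      (hasCompactSupport_pd (hasCompactSupport_pd hac i) i).mul_right
  simp only [lap, mul_add, add_mul]
  rw [integral_add (left_integrable 0) (left_integrable 1),
    integral_add (right_integrable 0) (right_integrable 1), integral_mul_pd_pd, integral_mul_pd_pd]

theorem integrable_norm_sq_of_hasCompactSupport (ha : Continuous a) (hac : HasCompactSupport a) :
    Integrable fun q ↦ ‖a q‖ ^ 2 := by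
  refine (ha.norm.pow 2).integrable_of_hasCompactSupport (hac.mono fun q hq ↦ ?_)
  simpa using hq

theorem integrable_gradSq (hf : ContDiff ℝ 1 f) (hfc : HasCompactSupport f) :
    Integrable (gradSq f) :=
  (integrable_norm_sq_of_hasCompactSupport (continuous_pd hf 0) (hasCompactSupport_pd hfc 0)).add
    (integrable_norm_sq_of_hasCompactSupport (continuous_pd hf 1) (hasCompactSupport_pd hfc 1))

theorem integral_pd_mul_conj_pd_comm (ha : ContDiff ℝ 1 a) (hb : ContDiff ℝ 1 b)
    (hac : HasCompactSupport a) (hbc : HasCompactSupport b) (i j : Fin 2) :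
    ∫ q, pd i a q * conj (pd j b q) = ∫ q, pd j a q * conj (pd i b q) := by
  simp only [← pd_conj]
  exact integral_fderiv_mul_fderiv_comm ha (contDiff_conj hb) hac
    (hbc.comp_left (g := starRingEnd ℂ) (map_zero _)) _ _

theorem norm_lap_sq_eq (hh : ContDiff ℝ 2 h) (q : E2) :
    ‖lap h q‖ ^ 2 = gradSq (pd 0 h) q + gradSq (pd 1 h) q
      + 2 * (pd 0 (pd 0 h) q * conj (pd 1 (pd 1 h) q)
        - pd 1 (pd 0 h) q * conj (pd 0 (pd 1 h) q)).re := by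
  have mixed_re : (pd 0 (pd 1 h) q * conj (pd 0 (pd 1 h) q)).re = ‖pd 0 (pd 1 h) q‖ ^ 2 := by
    rw [Complex.mul_conj']
    norm_cast
  rw [lap, ← Complex.normSq_eq_norm_sq, Complex.normSq_add, Complex.normSq_eq_norm_sq,
    Complex.normSq_eq_norm_sq, gradSq, gradSq, pd_comm hh 1 0, Complex.sub_re, mixed_re]
  ring

theorem integral_gradSq_pd_add_gradSq_pd (hh : ContDiff ℝ 2 h) (hc : HasCompactSupport h) :
    ∫ q, (gradSq (pd 0 h) q + gradSq (pd 1 h) q) = ∫ q, ‖lap h q‖ ^ 2 := by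
  have dpd := contDiff_one_pd hh
  have cpd := hasCompactSupport_pd hc
  have cross_integrable (i j : Fin 2) :
      Integrable fun q ↦ pd i (pd 0 h) q * conj (pd j (pd 1 h) q) :=
    ((continuous_pd (dpd 0) i).mul (Complex.continuous_conj.comp
      (continuous_pd (dpd 1) j))).integrable_of_hasCompactSupport
        (hasCompactSupport_pd (cpd 0) i).mul_right
  let D : E2 → ℂ := fun q ↦ pd 0 (pd 0 h) q * conj (pd 1 (pd 1 h) q)
    - pd 1 (pd 0 h) q * conj (pd 0 (pd 1 h) q)
  have D_integrable : Integrable D := (cross_integrable 0 1).sub (cross_integrable 1 0)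
  have integral_re_D : ∫ q, (D q).re = 0 := by
    refine (integral_re D_integrable).trans ?_
    rw [integral_sub (cross_integrable 0 1) (cross_integrable 1 0),
      integral_pd_mul_conj_pd_comm (dpd 0) (dpd 1) (cpd 0) (cpd 1), sub_self, map_zero]
  have hessian_integrable : Integrable fun q ↦ gradSq (pd 0 h) q + gradSq (pd 1 h) q :=
    (integrable_gradSq (dpd 0) (cpd 0)).add (integrable_gradSq (dpd 1) (cpd 1))
  have re_D_integrable : Integrable fun q ↦ 2 * (D q).re := D_integrable.re.const_mul 2
  calc ∫ q, (gradSq (pd 0 h) q + gradSq (pd 1 h) q)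
      = ∫ q, (gradSq (pd 0 h) q + gradSq (pd 1 h) q + 2 * (D q).re) := by
        rw [integral_add hessian_integrable re_D_integrable, integral_const_mul, integral_re_D,
          mul_zero, add_zero]
    _ = ∫ q, ‖lap h q‖ ^ 2 := by simp only [norm_lap_sq_eq hh, D]

end IntegrationByParts

/-! ### A Sobolev inequality on small discs -/

section Sobolev

theorem lintegral_enorm_sq_eq_eLpNorm_sq {α G : Type*} [MeasurableSpace α] [NormedAddCommGroup G]
    (g : α → G) (μ : Measure α) : ∫⁻ x, ‖g x‖ₑ ^ 2 ∂μ = eLpNorm g 2 μ ^ 2 := by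
  have := eLpNorm_nnreal_pow_eq_lintegral (f := g) (μ := μ) (p := 2) two_ne_zero
  simpa using this.symm

theorem eLpNorm_restrict_le_eLpNorm_mul_rpow {α G : Type*} [MeasurableSpace α]
    [NormedAddCommGroup G] {μ : Measure α} {g : α → G} (hg : AEStronglyMeasurable g μ) (S : Set α)
    {p q : ℝ≥0∞} (hpq : p ≤ q) :
    eLpNorm g p (μ.restrict S) ≤ eLpNorm g q μ * μ S ^ (1 / p.toReal - 1 / q.toReal) := by
  refine (eLpNorm_le_eLpNorm_mul_rpow_measure_univ hpq hg.restrict).trans ?_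
  rw [Measure.restrict_apply_univ]
  gcongr
  exact Measure.restrict_le_self

theorem eLpNorm_le_eLpNorm_mul_rpow_of_support_subset {α G : Type*} [MeasurableSpace α]
    [NormedAddCommGroup G] {μ : Measure α} {g : α → G} (hg : AEStronglyMeasurable g μ) {S : Set α}
    (hgS : Function.support g ⊆ S) {p q : ℝ≥0∞} (hpq : p ≤ q) :
    eLpNorm g p μ ≤ eLpNorm g q μ * μ S ^ (1 / p.toReal - 1 / q.toReal) := by
  rw [← eLpNorm_restrict_eq_of_support_subset hgS (p := p)]
  exact eLpNorm_restrict_le_eLpNorm_mul_rpow hg S hpq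

variable {G : Type*} [NormedAddCommGroup G] [NormedSpace ℝ G] [FiniteDimensional ℝ G]

theorem exists_eLpNorm_four_le_eLpNorm_fderiv {s : Set E2} (hs : Bornology.IsBounded s) :
    ∃ C : ℝ≥0∞, C ≠ ∞ ∧ ∀ g : E2 → G, ContDiff ℝ 1 g → Function.support g ⊆ s →
      eLpNorm g 4 volume ≤ C * eLpNorm (fderiv ℝ g) 2 volume := by
  let S : ℝ≥0 := eLpNormLESNormFDerivOfLeConst G (volume : Measure E2) s (4 / 3) 4
  let T := closure s
  refine ⟨S * volume T ^ (1 / 4 : ℝ), ENNReal.mul_ne_top ENNReal.coe_ne_top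
    (ENNReal.rpow_ne_top_of_nonneg (by norm_num) hs.closure.measure_lt_top.ne), fun g hg hgs ↦ ?_⟩
  have sobolev : eLpNorm g (4 : ℝ≥0) volume ≤ S * eLpNorm (fderiv ℝ g) (4 / 3 : ℝ≥0) volume := by
    refine eLpNorm_le_eLpNorm_fderiv_of_le volume hg hgs ?_ ?_ ?_ hs
    · rw [← NNReal.coe_le_coe]; norm_num
    · rw [finrank_euclideanSpace_fin, ← NNReal.coe_lt_coe]; norm_num
    · rw [finrank_euclideanSpace_fin]; norm_num
  have hölder : eLpNorm (fderiv ℝ g) (4 / 3 : ℝ≥0) volume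
      ≤ eLpNorm (fderiv ℝ g) (2 : ℝ≥0) volume * volume T ^ (1 / 4 : ℝ) := by
    convert eLpNorm_le_eLpNorm_mul_rpow_of_support_subset (μ := volume)
      (hg.continuous_fderiv one_ne_zero).aestronglyMeasurable
      ((support_fderiv_subset ℝ).trans (closure_mono hgs))
      (ENNReal.coe_le_coe.2 (by rw [← NNReal.coe_le_coe]; norm_num : (4 / 3 : ℝ≥0) ≤ 2)) using 3
    norm_num
  calc eLpNorm g 4 volume
      ≤ S * (eLpNorm (fderiv ℝ g) 2 volume * volume T ^ (1 / 4 : ℝ)) := by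
        exact_mod_cast sobolev.trans (mul_le_mul' le_rfl hölder)
    _ = S * volume T ^ (1 / 4 : ℝ) * eLpNorm (fderiv ℝ g) 2 volume := by ring

theorem volume_ball_rpow_one_div_four (p : E2) {r : ℝ} (hr : 0 < r) :
    volume (ball p r) ^ (1 / 4 : ℝ)
      = ENNReal.ofReal r ^ (1 / 2 : ℝ) * volume (ball (0 : E2) 1) ^ (1 / 4 : ℝ) := by
  rw [Measure.addHaar_ball_of_pos volume p hr, ENNReal.mul_rpow_of_nonneg _ _ (by norm_num),
    finrank_euclideanSpace_fin, ENNReal.ofReal_pow hr.le, ← ENNReal.rpow_natCast,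
    ← ENNReal.rpow_mul]
  norm_num

theorem exists_lintegral_ball_enorm_sq_le {s : Set E2} (hs : Bornology.IsBounded s) :
    ∃ C : ℝ≥0∞, C ≠ ∞ ∧ ∀ g : E2 → G, ContDiff ℝ 1 g → Function.support g ⊆ s →
      ∀ (p : E2) (r : ℝ), 0 < r →
        ∫⁻ q in ball p r, ‖g q‖ₑ ^ 2 ≤ C * ENNReal.ofReal r * ∫⁻ q, ‖fderiv ℝ g q‖ₑ ^ 2 := by
  obtain ⟨C, hC, sobolev⟩ := exists_eLpNorm_four_le_eLpNorm_fderiv (G := G) hs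
  let W := volume (ball (0 : E2) 1) ^ (1 / 4 : ℝ)
  have hW : W ≠ ∞ := ENNReal.rpow_ne_top_of_nonneg (by norm_num) measure_ball_lt_top.ne
  refine ⟨(C * W) ^ 2, ENNReal.pow_ne_top (ENNReal.mul_ne_top hC hW), fun g hg hgs p r hr ↦ ?_⟩
  have hölder : eLpNorm g 2 (volume.restrict (ball p r))
      ≤ eLpNorm g 4 volume * volume (ball p r) ^ (1 / 4 : ℝ) := by
    convert eLpNorm_restrict_le_eLpNorm_mul_rpow (μ := volume)
      hg.continuous.aestronglyMeasurable (ball p r) (by norm_num : (2 : ℝ≥0∞) ≤ 4) using 3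
    norm_num
  rw [lintegral_enorm_sq_eq_eLpNorm_sq, lintegral_enorm_sq_eq_eLpNorm_sq]
  calc eLpNorm g 2 (volume.restrict (ball p r)) ^ 2
      ≤ (C * eLpNorm (fderiv ℝ g) 2 volume * (ENNReal.ofReal r ^ (1 / 2 : ℝ) * W)) ^ 2 := by
        rw [← volume_ball_rpow_one_div_four p hr]
        gcongr
        exact hölder.trans (by gcongr; exact sobolev g hg hgs)
    _ = (C * W) ^ 2 * (ENNReal.ofReal r ^ (1 / 2 : ℝ)) ^ 2 * eLpNorm (fderiv ℝ g) 2 volume ^ 2 := by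
        ring
    _ = (C * W) ^ 2 * ENNReal.ofReal r * eLpNorm (fderiv ℝ g) 2 volume ^ 2 := by
        rw [← ENNReal.rpow_mul_natCast]
        norm_num

end Sobolev

/-! ### Cutoffs and interior estimates for the Laplacian -/

/-- A smooth bump function at `p`, made complex-valued so that it can localise functions
`E2 → ℂ`. -/
def cutoff {p : E2} (χ : ContDiffBump p) (q : E2) : ℂ := (χ q : ℂ)

section Cutoff

variable {p q : E2} (χ : ContDiffBump p)

theorem contDiff_cutoff : ContDiff ℝ 2 (cutoff χ) :=
  Complex.ofRealCLM.contDiff.comp χ.contDiff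

theorem tsupport_cutoff_subset : tsupport (cutoff χ) ⊆ closedBall p χ.rOut := by
  rw [← χ.tsupport_eq]
  exact closure_mono fun q hq ↦ Complex.ofReal_ne_zero.1 hq

theorem hasCompactSupport_cutoff : HasCompactSupport (cutoff χ) :=
  (isCompact_closedBall p χ.rOut).of_isClosed_subset (isClosed_tsupport _)
    (tsupport_cutoff_subset χ)

theorem norm_cutoff_le_one : ‖cutoff χ q‖ ≤ 1 := by
  rw [cutoff, Complex.norm_real, norm_of_nonneg χ.nonneg]
  exact χ.le_one

theorem tsupport_cutoff_mul_subset (F : E2 → ℂ) :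
    tsupport (fun x ↦ cutoff χ x * F x) ⊆ closedBall p χ.rOut :=
  tsupport_mul_subset_left.trans (tsupport_cutoff_subset χ)

theorem cutoff_mul_eventuallyEq (F : E2 → ℂ) (hq : q ∈ ball p χ.rIn) :
    (fun x ↦ cutoff χ x * F x) =ᶠ[𝓝 q] F := by
  filter_upwards [isOpen_ball.mem_nhds hq] with x hx
  rw [cutoff, χ.one_of_mem_closedBall (ball_subset_closedBall hx), Complex.ofReal_one, one_mul]

theorem contDiff_cutoff_mul {Ω : Set E2} (hΩ : IsOpen Ω) (hχ : closedBall p χ.rOut ⊆ Ω)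
    {F : E2 → ℂ} (hF : ContDiffOn ℝ 2 F Ω) : ContDiff ℝ 2 fun x ↦ cutoff χ x * F x := by
  refine contDiff_iff_contDiffAt.2 fun q ↦ ?_
  by_cases hq : q ∈ Ω
  · exact (contDiff_cutoff χ).contDiffAt.mul (hF.contDiffAt (hΩ.mem_nhds hq))
  · have hq' : q ∉ tsupport fun x ↦ cutoff χ x * F x :=
      fun h ↦ hq (hχ (tsupport_cutoff_mul_subset χ F h))
    exact contDiffAt_const.congr_of_eventuallyEq (notMem_tsupport_iff_eventuallyEq.1 hq')

theorem exists_norm_lap_cutoff_le_and_norm_pd_cutoff_le :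
    ∃ M, ∀ q, ‖lap (cutoff χ) q‖ ≤ M ∧ ∀ i, ‖pd i (cutoff χ) q‖ ≤ M := by
  have hχ := contDiff_cutoff χ
  have hχc := hasCompactSupport_cutoff χ
  obtain ⟨L, hL⟩ := (continuous_lap hχ).bounded_above_of_compact_support
    (hasCompactSupport_lap hχc)
  choose D hD using fun i ↦ (continuous_pd (hχ.of_le one_le_two)
    i).bounded_above_of_compact_support (hasCompactSupport_pd hχc i)
  refine ⟨max L (max (D 0) (D 1)), fun q ↦ ⟨le_max_of_le_left (hL q), Fin.forall_fin_two.2 ?_⟩⟩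
  exact ⟨le_max_of_le_right (le_max_of_le_left (hD 0 q)),
    le_max_of_le_right (le_max_of_le_right (hD 1 q))⟩

end Cutoff

/-- The density `|F|² + |ΔF|²` of the squared graph norm of the Laplacian. -/
def graphSq (F : E2 → ℂ) (q : E2) : ℝ := ‖F q‖ ^ 2 + ‖lap F q‖ ^ 2

section InteriorEstimate

variable {F : E2 → ℂ} {p : E2} (χ : ContDiffBump p)

theorem graphSq_nonneg (F : E2 → ℂ) (q : E2) : 0 ≤ graphSq F q := by
  unfold graphSq
  positivity

theorem continuous_graphSq (hF : ContDiff ℝ 2 F) : Continuous (graphSq F) :=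
  (hF.continuous.norm.pow 2).add ((continuous_lap hF).norm.pow 2)

theorem continuous_re_lap_mul_conj (hF : ContDiff ℝ 2 F) :
    Continuous fun q ↦ (lap F q * conj (F q)).re :=
  Complex.continuous_re.comp
    ((continuous_lap hF).mul (Complex.continuous_conj.comp hF.continuous))

theorem integrable_bump_mul {g : E2 → ℝ} (hg : Continuous g) : Integrable fun q ↦ χ q * g q :=
  (χ.continuous.mul hg).integrable_of_hasCompactSupport χ.hasCompactSupport.mul_right

theorem re_lap_cutoff_mul_mul_conj (F : E2 → ℂ) (q : E2) :
    (lap (cutoff χ) q * (F q * conj (F q))).re = (lap (cutoff χ) q).re * ‖F q‖ ^ 2 := by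
  rw [Complex.mul_conj', ← Complex.ofReal_pow, Complex.re_mul_ofReal]

theorem re_cutoff_mul_lap_mul_conj (hF : ContDiff ℝ 2 F) (q : E2) :
    (cutoff χ q * lap (fun x ↦ F x * conj (F x)) q).re
      = 2 * (χ q * gradSq F q) + 2 * (χ q * (lap F q * conj (F q)).re) := by
  rw [cutoff, Complex.re_ofReal_mul, re_lap_mul_conj_self hF]
  ring

theorem two_mul_integral_bump_mul_gradSq (hF : ContDiff ℝ 2 F) :
    2 * ∫ q, χ q * gradSq F q
      = ∫ q, ((lap (cutoff χ) q).re * ‖F q‖ ^ 2 - 2 * (χ q * (lap F q * conj (F q)).re)) := by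
  have hχ := contDiff_cutoff χ
  have hχc := hasCompactSupport_cutoff χ
  have hFF : ContDiff ℝ 2 fun x ↦ F x * conj (F x) := hF.mul (contDiff_conj hF)
  have grad_integrable :=
    (integrable_bump_mul χ (continuous_gradSq (hF.of_le one_le_two))).const_mul 2
  have cross_integrable := (integrable_bump_mul χ (continuous_re_lap_mul_conj hF)).const_mul 2
  have left_integrable : Integrable fun q ↦ cutoff χ q * lap (fun x ↦ F x * conj (F x)) q :=
    (hχ.continuous.mul (continuous_lap hFF)).integrable_of_hasCompactSupport hχc.mul_right
  have right_integrable : Integrable fun q ↦ lap (cutoff χ) q * (F q * conj (F q)) :=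
    ((continuous_lap hχ).mul hFF.continuous).integrable_of_hasCompactSupport
      (hasCompactSupport_lap hχc).mul_right
  have norm_sq_integrable : Integrable fun q ↦ (lap (cutoff χ) q).re * ‖F q‖ ^ 2 := by
    simp only [← re_lap_cutoff_mul_mul_conj]
    exact right_integrable.re
  have green : ∫ q, (2 * (χ q * gradSq F q) + 2 * (χ q * (lap F q * conj (F q)).re))
      = ∫ q, (lap (cutoff χ) q).re * ‖F q‖ ^ 2 := by
    simp only [← re_cutoff_mul_lap_mul_conj χ hF, ← re_lap_cutoff_mul_mul_conj]
    exact ((integral_re left_integrable).trans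
      (congrArg Complex.re (integral_mul_lap hχ hFF hχc))).trans (integral_re right_integrable).symm
  rw [integral_add grad_integrable cross_integrable, integral_const_mul] at green
  rw [integral_sub norm_sq_integrable cross_integrable]
  linarith

theorem mul_norm_sq_sub_two_mul_re_le {w M c : ℝ} (hw : w ≤ M) (hM : 0 ≤ M) (hc₀ : 0 ≤ c)
    (hc₁ : c ≤ 1) (x y : ℂ) :
    w * ‖x‖ ^ 2 - 2 * (c * (y * conj x).re) ≤ (M + 1) * (‖x‖ ^ 2 + ‖y‖ ^ 2) := by
  have neg_re_le : -(c * (y * conj x).re) ≤ ‖x‖ * ‖y‖ := by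
    calc -(c * (y * conj x).re) ≤ |c * (y * conj x).re| := neg_le_abs _
      _ = c * |(y * conj x).re| := by rw [abs_mul, abs_of_nonneg hc₀]
      _ ≤ 1 * ‖y * conj x‖ := by gcongr; exact Complex.abs_re_le_norm _
      _ = ‖x‖ * ‖y‖ := by rw [one_mul, norm_mul, RCLike.norm_conj, mul_comm]
  nlinarith [two_mul_le_add_sq ‖x‖ ‖y‖, mul_nonneg hM (sq_nonneg ‖y‖),
    mul_le_mul_of_nonneg_right hw (sq_nonneg ‖x‖)]

theorem setIntegral_gradSq_le_integral_bump_mul_gradSq (hF : ContDiff ℝ 1 F) :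
    ∫ q in closedBall p χ.rIn, gradSq F q ≤ ∫ q, χ q * gradSq F q := by
  calc ∫ q in closedBall p χ.rIn, gradSq F q = ∫ q in closedBall p χ.rIn, χ q * gradSq F q :=
        setIntegral_congr_fun measurableSet_closedBall fun q hq ↦ by
          simp only [χ.one_of_mem_closedBall hq, one_mul]
    _ ≤ ∫ q, χ q * gradSq F q :=
        setIntegral_le_integral (integrable_bump_mul χ (continuous_gradSq hF))
          (.of_forall fun q ↦ mul_nonneg χ.nonneg (gradSq_nonneg F q))

theorem exists_setIntegral_gradSq_le_setIntegral_graphSq :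
    ∃ C, 0 ≤ C ∧ ∀ F : E2 → ℂ, ContDiff ℝ 2 F →
      ∫ q in closedBall p χ.rIn, gradSq F q ≤ C * ∫ q in closedBall p χ.rOut, graphSq F q := by
  obtain ⟨M, hM⟩ := exists_norm_lap_cutoff_le_and_norm_pd_cutoff_le χ
  have hM₀ : 0 ≤ M := (norm_nonneg _).trans (hM p).1
  refine ⟨M + 1, by positivity, fun F hF ↦ ?_⟩
  let R : E2 → ℝ := fun q ↦
    (lap (cutoff χ) q).re * ‖F q‖ ^ 2 - 2 * (χ q * (lap F q * conj (F q)).re)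
  have caccioppoli : 2 * ∫ q, χ q * gradSq F q = ∫ q, R q := two_mul_integral_bump_mul_gradSq χ hF
  have R_eq_zero (q : E2) (hq : q ∉ closedBall p χ.rOut) : R q = 0 := by
    have lap_eq_zero : lap (cutoff χ) q = 0 :=
      Function.notMem_support.1 fun h ↦ hq (tsupport_cutoff_subset χ (support_lap_subset h))
    have bump_eq_zero : χ q = 0 := χ.zero_of_le_dist (not_le.1 hq).le
    simp only [R, lap_eq_zero, bump_eq_zero, Complex.zero_re, zero_mul, mul_zero, sub_zero]
  have R_continuous : Continuous R :=
    ((Complex.continuous_re.comp (continuous_lap (contDiff_cutoff χ))).mul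
      (hF.continuous.norm.pow 2)).sub
      (continuous_const.mul (χ.continuous.mul (continuous_re_lap_mul_conj hF)))
  have R_le : ∫ q in closedBall p χ.rOut, R q
      ≤ ∫ q in closedBall p χ.rOut, (M + 1) * graphSq F q :=
    setIntegral_mono (R_continuous.continuousOn.integrableOn_compact (isCompact_closedBall _ _))
      ((continuous_graphSq hF).continuousOn.integrableOn_compact
        (isCompact_closedBall _ _) |>.const_mul _)
      fun q ↦ mul_norm_sq_sub_two_mul_re_le ((Complex.re_le_norm _).trans (hM q).1) hM₀ χ.nonneg
        χ.le_one (F q) (lap F q)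
  rw [setIntegral_eq_integral_of_forall_compl_eq_zero R_eq_zero, integral_const_mul] at R_le
  have gradient_nonneg : 0 ≤ ∫ q in closedBall p χ.rIn, gradSq F q :=
    integral_nonneg fun q ↦ gradSq_nonneg F q
  linarith [setIntegral_gradSq_le_integral_bump_mul_gradSq χ (hF.of_le one_le_two)]

theorem norm_lap_cutoff_mul_sq_le {M : ℝ} {q : E2} (hF : ContDiff ℝ 2 F)
    (hlap : ‖lap (cutoff χ) q‖ ≤ M) (hpd : ∀ i, ‖pd i (cutoff χ) q‖ ≤ M) :
    ‖lap (fun x ↦ cutoff χ x * F x) q‖ ^ 2 ≤ (16 * M ^ 2 + 4) * (graphSq F q + gradSq F q) := by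
  have triangle : ‖lap (fun x ↦ cutoff χ x * F x) q‖
      ≤ M * ‖F q‖ + ‖lap F q‖ + 2 * M * ‖pd 0 F q‖ + 2 * M * ‖pd 1 F q‖ := by
    rw [lap_mul (contDiff_cutoff χ) hF]
    calc _ ≤ ‖lap (cutoff χ) q‖ * ‖F q‖ + ‖cutoff χ q‖ * ‖lap F q‖
          + 2 * (‖pd 0 (cutoff χ) q‖ * ‖pd 0 F q‖ + ‖pd 1 (cutoff χ) q‖ * ‖pd 1 F q‖) := by
          refine norm_add₃_le.trans ?_
          rw [norm_mul, norm_mul, norm_mul 2, Complex.norm_ofNat, ← norm_mul (pd 0 _ q),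
            ← norm_mul (pd 1 _ q)]
          gcongr
          exact norm_add_le _ _
      _ ≤ M * ‖F q‖ + 1 * ‖lap F q‖ + 2 * (M * ‖pd 0 F q‖ + M * ‖pd 1 F q‖) := by
          gcongr
          exacts [norm_cutoff_le_one χ, hpd 0, hpd 1]
      _ = _ := by ring
  have sq_sum_le (a b c d : ℝ) : (a + b + c + d) ^ 2 ≤ 4 * (a ^ 2 + b ^ 2 + c ^ 2 + d ^ 2) := by
    linarith [add_sq_le (a := a + b) (b := c + d), add_sq_le (a := a) (b := b),
      add_sq_le (a := c) (b := d)]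
  calc ‖lap (fun x ↦ cutoff χ x * F x) q‖ ^ 2
      ≤ _ := (pow_le_pow_left₀ (norm_nonneg _) triangle 2).trans (sq_sum_le _ _ _ _)
    _ ≤ (16 * M ^ 2 + 4) * (graphSq F q + gradSq F q) := by
      rw [graphSq, gradSq]
      nlinarith [sq_nonneg (M * ‖F q‖), sq_nonneg (M * ‖lap F q‖), sq_nonneg ‖F q‖,
        sq_nonneg ‖pd 0 F q‖, sq_nonneg ‖pd 1 F q‖]

theorem exists_integral_norm_lap_cutoff_mul_sq_le {R : ℝ} (hR : χ.rOut < R) :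
    ∃ C, 0 ≤ C ∧ ∀ F : E2 → ℂ, ContDiff ℝ 2 F →
      ∫ q, ‖lap (fun x ↦ cutoff χ x * F x) q‖ ^ 2 ≤ C * ∫ q in closedBall p R, graphSq F q := by
  obtain ⟨M, hM⟩ := exists_norm_lap_cutoff_le_and_norm_pd_cutoff_le χ
  obtain ⟨C, hC₀, interior⟩ :=
    exists_setIntegral_gradSq_le_setIntegral_graphSq (⟨χ.rOut, R, χ.rOut_pos, hR⟩ : ContDiffBump p)
  refine ⟨(16 * M ^ 2 + 4) * (1 + C), by positivity, fun F hF ↦ ?_⟩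
  let B := closedBall p χ.rOut
  have integrableOn {g : E2 → ℝ} (hg : Continuous g) (r : ℝ) : IntegrableOn g (closedBall p r) :=
    hg.continuousOn.integrableOn_compact (isCompact_closedBall p r)
  have graph_integrable := integrableOn (continuous_graphSq hF)
  have grad_integrable := integrableOn (continuous_gradSq (hF.of_le one_le_two))
  have lap_continuous := continuous_lap ((contDiff_cutoff χ).mul hF)
  have lap_eq_zero (q : E2) (hq : q ∉ B) : ‖lap (fun x ↦ cutoff χ x * F x) q‖ ^ 2 = 0 := by
    rw [Function.notMem_support.1 fun h ↦
      hq (tsupport_cutoff_mul_subset χ F (support_lap_subset h)), norm_zero, zero_pow two_ne_zero]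
  have graph_mono : ∫ q in B, graphSq F q ≤ ∫ q in closedBall p R, graphSq F q :=
    setIntegral_mono_set (graph_integrable R) (.of_forall (graphSq_nonneg F))
      (closedBall_subset_closedBall hR.le).eventuallyLE
  calc ∫ q, ‖lap (fun x ↦ cutoff χ x * F x) q‖ ^ 2
      = ∫ q in B, ‖lap (fun x ↦ cutoff χ x * F x) q‖ ^ 2 :=
        (setIntegral_eq_integral_of_forall_compl_eq_zero lap_eq_zero).symm
    _ ≤ ∫ q in B, (16 * M ^ 2 + 4) * (graphSq F q + gradSq F q) :=
        setIntegral_mono (integrableOn (lap_continuous.norm.pow 2) _)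
          (((graph_integrable _).add (grad_integrable _)).const_mul _)
          fun q ↦ norm_lap_cutoff_mul_sq_le χ hF (hM q).1 (hM q).2
    _ = (16 * M ^ 2 + 4) * ((∫ q in B, graphSq F q) + ∫ q in B, gradSq F q) := by
        rw [integral_const_mul, integral_add (graph_integrable _) (grad_integrable _)]
    _ ≤ (16 * M ^ 2 + 4) * (1 + C) * ∫ q in closedBall p R, graphSq F q := by
        rw [mul_assoc, add_mul 1, one_mul]
        gcongr
        exact interior F hF

end InteriorEstimate

/-! ### Gradient bounds on small discs -/

section SmallDisc

variable {F f : E2 → ℂ} {p : E2} {Ω : Set E2} {ρ : ℝ}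

theorem ofReal_norm_sq {G : Type*} [SeminormedAddGroup G] (z : G) :
    ENNReal.ofReal (‖z‖ ^ 2) = ‖z‖ₑ ^ 2 := by
  rw [ENNReal.ofReal_pow (norm_nonneg z), ofReal_norm]

/-- The Dirichlet energy `∫_S |∇F|²`, with values in `[0, ∞]`. -/
def dirichletEnergy (F : E2 → ℂ) (S : Set E2) : ℝ≥0∞ := ∫⁻ q in S, ENNReal.ofReal (gradSq F q)

theorem dirichletEnergy_eq_add (F : E2 → ℂ) (S : Set E2) :
    dirichletEnergy F S = (∫⁻ q in S, ‖pd 0 F q‖ₑ ^ 2) + ∫⁻ q in S, ‖pd 1 F q‖ₑ ^ 2 := by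
  rw [← lintegral_add_left ((measurable_pd F 0).enorm.pow_const 2)]
  simp only [dirichletEnergy, gradSq, ENNReal.ofReal_add (sq_nonneg _) (sq_nonneg _),
    ofReal_norm_sq]

theorem dirichletEnergy_congr {S : Set E2} (hS : MeasurableSet S)
    (h : ∀ q ∈ S, F =ᶠ[𝓝 q] f) : dirichletEnergy F S = dirichletEnergy f S :=
  setLIntegral_congr_fun hS fun q hq ↦ by simp only [gradSq_congr (h q hq)]

theorem exists_dirichletEnergy_ball_le_integral_norm_lap_sq {s : Set E2}
    (hs : Bornology.IsBounded s) :
    ∃ C : ℝ≥0∞, C ≠ ∞ ∧ ∀ h : E2 → ℂ, ContDiff ℝ 2 h → HasCompactSupport h → tsupport h ⊆ s →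
      ∀ (p : E2) (r : ℝ), 0 < r → dirichletEnergy h (ball p r)
        ≤ C * ENNReal.ofReal r * ENNReal.ofReal (∫ q, ‖lap h q‖ ^ 2) := by
  obtain ⟨C, hC, sobolev⟩ := exists_lintegral_ball_enorm_sq_le (G := ℂ) hs
  refine ⟨C, hC, fun h hh hhc hhs p r hr ↦ ?_⟩
  have sobolev_pd (i : Fin 2) : ∫⁻ q in ball p r, ‖pd i h q‖ₑ ^ 2
      ≤ C * ENNReal.ofReal r * ∫⁻ q, ENNReal.ofReal (gradSq (pd i h) q) := by
    refine (sobolev _ (contDiff_one_pd hh i) ((support_pd_subset i).trans hhs) p r hr).trans ?_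
    gcongr with q
    rw [← ofReal_norm_sq]
    exact ENNReal.ofReal_le_ofReal (norm_fderiv_sq_le_gradSq _ q)
  have pd_integrable (i : Fin 2) : Integrable (gradSq (pd i h)) :=
    integrable_gradSq (contDiff_one_pd hh i) (hasCompactSupport_pd hhc i)
  have sum_integrable : Integrable fun q ↦ gradSq (pd 0 h) q + gradSq (pd 1 h) q :=
    (pd_integrable 0).add (pd_integrable 1)
  calc dirichletEnergy h (ball p r)
      ≤ C * ENNReal.ofReal r * (∫⁻ q, ENNReal.ofReal (gradSq (pd 0 h) q))
        + C * ENNReal.ofReal r * ∫⁻ q, ENNReal.ofReal (gradSq (pd 1 h) q) :=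
        (dirichletEnergy_eq_add h _).trans_le (add_le_add (sobolev_pd 0) (sobolev_pd 1))
    _ = C * ENNReal.ofReal r * ∫⁻ q, ENNReal.ofReal (gradSq (pd 0 h) q + gradSq (pd 1 h) q) := by
        simp only [ENNReal.ofReal_add (gradSq_nonneg _ _) (gradSq_nonneg _ _)]
        rw [← mul_add, ← lintegral_add_left (measurable_gradSq _).ennreal_ofReal]
    _ = C * ENNReal.ofReal r * ENNReal.ofReal (∫ q, ‖lap h q‖ ^ 2) := by
        rw [← integral_gradSq_pd_add_gradSq_pd hh hhc,
          ofReal_integral_eq_lintegral_ofReal sum_integrable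
            (.of_forall fun q ↦ add_nonneg (gradSq_nonneg _ q) (gradSq_nonneg _ q))]

theorem exists_dirichletEnergy_ball_le_setIntegral_graphSq (p : E2) (hρ : 0 < ρ) :
    ∃ C : ℝ≥0∞, C ≠ ∞ ∧ ∀ F : E2 → ℂ, ContDiff ℝ 2 F → ∀ r : ℝ, 0 < r → r ≤ ρ →
      dirichletEnergy F (ball p r) ≤ C * ENNReal.ofReal r *
        ENNReal.ofReal (∫ q in closedBall p (3 * ρ), graphSq F q) := by
  let χ : ContDiffBump p := ⟨ρ, 2 * ρ, hρ, by linarith⟩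
  obtain ⟨A, hA₀, lap_le⟩ := exists_integral_norm_lap_cutoff_mul_sq_le χ
    (by simp only [χ]; linarith : χ.rOut < 3 * ρ)
  obtain ⟨C, hC, energy_le⟩ := exists_dirichletEnergy_ball_le_integral_norm_lap_sq
    (isBounded_closedBall (x := p) (r := χ.rOut))
  refine ⟨C * ENNReal.ofReal A, ENNReal.mul_ne_top hC ENNReal.ofReal_ne_top,
    fun F hF r hr hrρ ↦ ?_⟩
  calc dirichletEnergy F (ball p r)
      = dirichletEnergy (fun x ↦ cutoff χ x * F x) (ball p r) :=
        (dirichletEnergy_congr measurableSet_ball fun q hq ↦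
          cutoff_mul_eventuallyEq χ F (ball_subset_ball hrρ hq)).symm
    _ ≤ C * ENNReal.ofReal r *
          ENNReal.ofReal (∫ q, ‖lap (fun x ↦ cutoff χ x * F x) q‖ ^ 2) :=
        energy_le _ ((contDiff_cutoff χ).mul hF) (hasCompactSupport_cutoff χ).mul_right
          (tsupport_cutoff_mul_subset χ F) p r hr
    _ ≤ C * ENNReal.ofReal r *
          ENNReal.ofReal (A * ∫ q in closedBall p (3 * ρ), graphSq F q) := by
        gcongr
        exact lap_le F hF
    _ = _ := by
        rw [ENNReal.ofReal_mul hA₀]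
        ring

theorem norm_neg_add_sq (x y : ℂ) : ‖-y + x‖ ^ 2 = ‖x‖ ^ 2 + ‖y‖ ^ 2 - 2 * (y * conj x).re := by
  rw [← Complex.normSq_eq_norm_sq, Complex.normSq_add, Complex.normSq_eq_norm_sq,
    Complex.normSq_eq_norm_sq, norm_neg, neg_mul, Complex.neg_re]
  ring

theorem setIntegral_graphSq_le (hΩ : IsOpen Ω) (hf : ContinuousOn f Ω)
    (hf₀ : IntegrableOn (fun q ↦ ‖f q‖ ^ 2) Ω) (hf₂ : IntegrableOn (fun q ↦ ‖lap f q‖ ^ 2) Ω)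
    (hre : (∫ q in Ω, lap f q * conj (f q)).re ≤ 0) :
    ∫ q in Ω, graphSq f q ≤ ∫ q in Ω, ‖-lap f q + f q‖ ^ 2 := by
  have cross_integrable : IntegrableOn (fun q ↦ lap f q * conj (f q)) Ω := by
    refine (hf₀.add hf₂).mono' ((measurable_lap f).aestronglyMeasurable.mul
      (Complex.continuous_conj.comp_aestronglyMeasurable
        (hf.aestronglyMeasurable hΩ.measurableSet))) (.of_forall fun q ↦ ?_)
    rw [norm_mul, RCLike.norm_conj, Pi.add_apply]
    nlinarith [two_mul_le_add_sq ‖f q‖ ‖lap f q‖, sq_nonneg ‖f q‖, sq_nonneg ‖lap f q‖]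
  have graph_integrable : IntegrableOn (graphSq f) Ω := hf₀.add hf₂
  have re_integrable : IntegrableOn (fun q ↦ (lap f q * conj (f q)).re) Ω := cross_integrable.re
  have re_nonpos : ∫ q in Ω, (lap f q * conj (f q)).re ≤ 0 :=
    (integral_re cross_integrable).trans_le hre
  have expand : ∫ q in Ω, ‖-lap f q + f q‖ ^ 2
      = (∫ q in Ω, graphSq f q) - 2 * ∫ q in Ω, (lap f q * conj (f q)).re := by
    simp only [norm_neg_add_sq]
    rw [← integral_const_mul, ← integral_sub graph_integrable (re_integrable.const_mul 2)]
    rfl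
  linarith

theorem exists_dirichletEnergy_ball_le (hΩ : IsOpen Ω) (hρ : 0 < ρ)
    (hsub : closedBall p (5 * ρ) ⊆ Ω) :
    ∃ C : ℝ≥0∞, C ≠ ∞ ∧ ∀ f : E2 → ℂ, ContDiffOn ℝ 2 f Ω →
      IntegrableOn (fun q ↦ ‖f q‖ ^ 2) Ω → IntegrableOn (fun q ↦ ‖lap f q‖ ^ 2) Ω →
      (∫ q in Ω, lap f q * conj (f q)).re ≤ 0 → ∀ r : ℝ, 0 < r → r ≤ ρ →
        dirichletEnergy f (ball p r)
          ≤ C * ENNReal.ofReal r * ENNReal.ofReal (∫ q in Ω, ‖-lap f q + f q‖ ^ 2) := by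
  obtain ⟨C, hC, energy_le⟩ := exists_dirichletEnergy_ball_le_setIntegral_graphSq p hρ
  refine ⟨C, hC, fun f hf hf₀ hf₂ hre r hr hrρ ↦ ?_⟩
  let χ : ContDiffBump p := ⟨4 * ρ, 5 * ρ, by linarith, by linarith⟩
  let F : E2 → ℂ := fun x ↦ cutoff χ x * f x
  have hF : ContDiff ℝ 2 F := contDiff_cutoff_mul χ hΩ hsub hf
  have F_eq (q : E2) (hq : q ∈ ball p (4 * ρ)) : F =ᶠ[𝓝 q] f := cutoff_mul_eventuallyEq χ f hq
  have graph_eq : ∫ q in closedBall p (3 * ρ), graphSq F q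
      = ∫ q in closedBall p (3 * ρ), graphSq f q := by
    refine setIntegral_congr_fun measurableSet_closedBall fun q hq ↦ ?_
    have near := F_eq q (closedBall_subset_ball (by linarith) hq)
    simp only [graphSq, lap_congr near, near.eq_of_nhds]
  have graph_mono : ∫ q in closedBall p (3 * ρ), graphSq f q ≤ ∫ q in Ω, graphSq f q :=
    setIntegral_mono_set (hf₀.add hf₂) (.of_forall (graphSq_nonneg f))
      ((closedBall_subset_closedBall (by linarith)).trans hsub).eventuallyLE
  rw [← dirichletEnergy_congr measurableSet_ball fun q hq ↦
    F_eq q (ball_subset_ball (by linarith) hq)]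
  refine (energy_le F hF r hr hrρ).trans ?_
  rw [graph_eq]
  gcongr
  exact graph_mono.trans (setIntegral_graphSq_le hΩ hf.continuousOn hf₀ hf₂ hre)

end SmallDisc

/-! ### Polar coordinates -/

theorem circ_eq_smul (r φ : ℝ) : circ r φ = r • circ 1 φ := by
  ext i
  fin_cases i <;> simp [circ, pt]

theorem norm_circ (r φ : ℝ) : ‖circ r φ‖ = |r| := by
  rw [circ_eq_smul, norm_smul, Real.norm_eq_abs]
  simp [circ, pt, EuclideanSpace.norm_eq]

theorem continuous_circ : Continuous fun z : ℝ × ℝ ↦ circ z.1 z.2 := by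
  refine (PiLp.continuous_toLp 2 _).comp (continuous_pi (Fin.forall_fin_two.2 ⟨?_, ?_⟩))
  · exact continuous_fst.mul (Real.continuous_cos.comp continuous_snd)
  · exact continuous_fst.mul (Real.continuous_sin.comp continuous_snd)

theorem pt_add_mul_cos_add_mul_sin (x y r φ : ℝ) :
    pt (x + r * Real.cos φ) (y + r * Real.sin φ) = pt x y + circ r φ := by
  ext i
  fin_cases i <;> simp [circ, pt]

theorem exists_circ_norm_eq (q : E2) : ∃ φ : ℝ, circ ‖q‖ φ = q := by
  have norm_eq : ‖q‖ = ‖(⟨q 0, q 1⟩ : ℂ)‖ := by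
    rw [Complex.norm_eq_sqrt_sq_add_sq, EuclideanSpace.norm_eq]
    simp
  refine ⟨Complex.arg ⟨q 0, q 1⟩, ?_⟩
  ext i
  fin_cases i <;> simp [circ, pt, norm_eq, Complex.norm_mul_cos_arg, Complex.norm_mul_sin_arg]

/-- The integral of `H` over the circle of radius `r` around `p` with respect to the angle; the
arclength integral is `r` times this. -/
def angularIntegral (H : E2 → ℝ≥0∞) (p : E2) (r : ℝ) : ℝ≥0∞ :=
  ∫⁻ φ in Ioo (-π) π, H (p + circ r φ)

section Polar

variable {H : E2 → ℝ≥0∞}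

theorem measurable_comp_add_circ (hH : Measurable H) (p : E2) :
    Measurable fun z : ℝ × ℝ ↦ H (p + circ z.1 z.2) :=
  hH.comp (continuous_const.add continuous_circ).measurable

theorem measurable_comp_add_circ_right (hH : Measurable H) (p : E2) (r : ℝ) :
    Measurable fun φ ↦ H (p + circ r φ) :=
  (measurable_comp_add_circ hH p).comp measurable_prodMk_left

theorem measurable_angularIntegral (hH : Measurable H) (p : E2) :
    Measurable (angularIntegral H p) :=
  (measurable_comp_add_circ hH p).lintegral_prod_right'

theorem lintegral_eq_lintegral_add_pt (hH : Measurable H) (p : E2) :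
    ∫⁻ q, H q = ∫⁻ z : ℝ × ℝ, H (p + pt z.1 z.2) := by
  rw [← lintegral_add_left_eq_self H p,
    ← (EuclideanSpace.volume_preserving_symm_measurableEquiv_toLp (Fin 2)).symm.lintegral_comp
      (f := fun q ↦ H (p + q)) (by fun_prop),
    ← (volume_preserving_finTwoArrow ℝ).symm.lintegral_comp
      (f := fun a ↦ H (p + (MeasurableEquiv.toLp 2 (Fin 2 → ℝ)).symm.symm a)) (by fun_prop)]
  rfl

theorem lintegral_eq_lintegral_polar (hH : Measurable H) (p : E2) :
    ∫⁻ q, H q = ∫⁻ r in Ioi 0, ∫⁻ φ in Ioo (-π) π, ENNReal.ofReal r * H (p + circ r φ) := by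
  have measurable_weighted :
      Measurable fun z : ℝ × ℝ ↦ ENNReal.ofReal z.1 * H (p + circ z.1 z.2) :=
    measurable_fst.ennreal_ofReal.mul (measurable_comp_add_circ hH p)
  have target_eq : polarCoord.target = Ioi (0 : ℝ) ×ˢ Ioo (-π) π := rfl
  rw [lintegral_eq_lintegral_add_pt hH p, ← lintegral_comp_polarCoord_symm, target_eq,
    Measure.volume_eq_prod, ← Measure.prod_restrict,
    ← lintegral_prod _ measurable_weighted.aemeasurable]
  rfl

theorem lintegral_eq_lintegral_angularIntegral (hH : Measurable H) (p : E2) :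
    ∫⁻ q, H q = ∫⁻ r in Ioi 0, ENNReal.ofReal r * angularIntegral H p r := by
  rw [lintegral_eq_lintegral_polar hH p]
  simp only [angularIntegral, lintegral_const_mul' _ _ ENNReal.ofReal_ne_top]

theorem exists_mul_angularIntegral_le (hH : Measurable H) (p : E2) {a b : ℝ} (ha : 0 ≤ a)
    (hab : a < b) :
    ∃ r ∈ Ioo a b, ENNReal.ofReal r * angularIntegral H p r
      ≤ (∫⁻ q, H q) / ENNReal.ofReal (b - a) := by
  have measurable_weighted : Measurable fun r ↦ ENNReal.ofReal r * angularIntegral H p r :=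
    ENNReal.measurable_ofReal.mul (measurable_angularIntegral hH p)
  obtain ⟨r, hr, le_average⟩ := exists_le_setLAverage (μ := volume) (s := Ioo a b) (by simp [hab])
    (by simp) measurable_weighted.aemeasurable
  refine ⟨r, hr, le_average.trans ?_⟩
  rw [setLAverage_eq, Real.volume_Ioo, lintegral_eq_lintegral_angularIntegral hH p]
  gcongr
  exact fun r hr ↦ ha.trans_lt hr.1

theorem exists_sq_mul_angularIntegral_le (hH : Measurable H) (p : E2) {a : ℝ} (ha : 0 < a) :
    ∃ r ∈ Ioo a (2 * a), ENNReal.ofReal a ^ 2 * angularIntegral H p r ≤ ∫⁻ q, H q := by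
  obtain ⟨r, hr, mul_le⟩ := exists_mul_angularIntegral_le hH p ha.le (by linarith : a < 2 * a)
  have ha₀ : ENNReal.ofReal a ≠ 0 := by simpa using ha
  refine ⟨r, hr, ?_⟩
  rw [show 2 * a - a = a by ring, ENNReal.le_div_iff_mul_le (.inl ha₀) (by simp)] at mul_le
  refine le_trans ?_ mul_le
  rw [sq, mul_right_comm]
  gcongr
  exact hr.1.le

theorem setLIntegral_ball_le_of_angularIntegral_le (hH : Measurable H) (p : E2) {R : ℝ}
    {J : ℝ≥0∞} (hJ : ∀ r ∈ Ioo 0 R, angularIntegral H p r ≤ J) :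
    ∫⁻ q in ball p R, H q ≤ ENNReal.ofReal R ^ 2 * J := by
  have weighted_le (r : ℝ) (hr : r ∈ Ioi 0) :
      ENNReal.ofReal r * angularIntegral ((ball p R).indicator H) p r
        ≤ (Ioo 0 R).indicator (fun _ ↦ ENNReal.ofReal R * J) r := by
    have mem_ball_iff (φ : ℝ) : p + circ r φ ∈ ball p R ↔ r < R := by
      rw [mem_ball, dist_self_add_left, norm_circ, abs_of_pos hr]
    by_cases hrR : r < R
    · rw [indicator_of_mem (show r ∈ Ioo 0 R from ⟨hr, hrR⟩)]
      simp only [angularIntegral, indicator_of_mem ((mem_ball_iff _).2 hrR)]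
      gcongr
      exact hJ r ⟨hr, hrR⟩
    · simp [angularIntegral, indicator_of_notMem (mt (mem_ball_iff _).1 hrR)]
  rw [← lintegral_indicator measurableSet_ball,
    lintegral_eq_lintegral_angularIntegral (hH.indicator measurableSet_ball) p]
  refine ((setLIntegral_mono' measurableSet_Ioi weighted_le).trans
    (setLIntegral_le_lintegral _ _)).trans_eq ?_
  rw [lintegral_indicator measurableSet_Ioo, setLIntegral_const, Real.volume_Ioo, sub_zero]
  ring

end Polar

/-! ### A trace inequality on circles -/

theorem sq_lintegral_mul_le {α : Type*} [MeasurableSpace α] {μ : Measure α} {f g : α → ℝ≥0∞}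
    (hf : AEMeasurable f μ) (hg : AEMeasurable g μ) :
    (∫⁻ x, f x * g x ∂μ) ^ 2 ≤ (∫⁻ x, f x ^ 2 ∂μ) * ∫⁻ x, g x ^ 2 ∂μ := by
  have holder := ENNReal.lintegral_mul_le_Lp_mul_Lq μ Real.HolderConjugate.two_two hf hg
  simp only [Pi.mul_apply, ENNReal.rpow_two] at holder
  refine (pow_le_pow_left' holder 2).trans_eq ?_
  rw [mul_pow, ← ENNReal.rpow_two, ← ENNReal.rpow_two, ← ENNReal.rpow_mul, ← ENNReal.rpow_mul]
  norm_num

theorem ennreal_add_sq_le (x y : ℝ≥0∞) : (x + y) ^ 2 ≤ 2 * x ^ 2 + 2 * y ^ 2 := by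
  have convexity := ENNReal.rpow_add_le_mul_rpow_add_rpow x y one_le_two
  norm_num at convexity
  rwa [mul_add] at convexity

theorem ofReal_sqrt_sq {x : ℝ} (hx : 0 ≤ x) : ENNReal.ofReal √x ^ 2 = ENNReal.ofReal x := by
  rw [← ENNReal.ofReal_pow (Real.sqrt_nonneg x), Real.sq_sqrt hx]

section Trace

variable {a b : ℝ}

theorem lintegral_Ioc_ofReal_inv (ha : 0 < a) (hab : a ≤ b) :
    ∫⁻ r in Ioc a b, ENNReal.ofReal r⁻¹ = ENNReal.ofReal (Real.log (b / a)) := by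
  rw [← ofReal_integral_eq_lintegral_ofReal, ← intervalIntegral.integral_of_le hab,
    integral_inv_of_pos ha (ha.trans_le hab)]
  · refine (intervalIntegrable_iff_integrableOn_Ioc_of_le hab).1
      (ContinuousOn.intervalIntegrable ?_)
    rw [uIcc_of_le hab]
    exact continuousOn_inv₀.mono fun r hr ↦ (ha.trans_le hr.1).ne'
  · exact (ae_restrict_iff' measurableSet_Ioc).2
      (.of_forall fun r hr ↦ inv_nonneg.2 (ha.trans hr.1).le)

-- Cauchy–Schwarz for `h = r^(-1/2) * (r^(1/2) * h)`.
theorem sq_lintegral_Ioc_le_log_mul {h : ℝ → ℝ≥0∞} (ha : 0 < a) (hab : a ≤ b)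
    (hh : AEMeasurable h (volume.restrict (Ioc a b))) :
    (∫⁻ r in Ioc a b, h r) ^ 2
      ≤ ENNReal.ofReal (Real.log (b / a)) * ∫⁻ r in Ioc a b, ENNReal.ofReal r * h r ^ 2 := by
  have cauchy_schwarz := sq_lintegral_mul_le (μ := volume.restrict (Ioc a b))
    (f := fun r ↦ ENNReal.ofReal √r⁻¹) (g := fun r ↦ ENNReal.ofReal √r * h r)
    (by fun_prop) (by fun_prop)
  convert cauchy_schwarz using 2
  · refine setLIntegral_congr_fun measurableSet_Ioc fun r hr ↦ ?_
    have : 0 < r := ha.trans hr.1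
    rw [← mul_assoc, ← ENNReal.ofReal_mul (by positivity), Real.sqrt_inv,
      inv_mul_cancel₀ (by positivity), ENNReal.ofReal_one, one_mul]
  · rw [← lintegral_Ioc_ofReal_inv ha hab]
    refine setLIntegral_congr_fun measurableSet_Ioc fun r hr ↦ ?_
    exact (ofReal_sqrt_sq (inv_nonneg.2 (ha.trans hr.1).le)).symm
  · refine setLIntegral_congr_fun measurableSet_Ioc fun r hr ↦ ?_
    simp only [mul_pow, ofReal_sqrt_sq (ha.trans hr.1).le]

theorem enorm_le_enorm_add_lintegral_enorm_deriv {G : Type*} [NormedAddCommGroup G]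
    [NormedSpace ℝ G] [CompleteSpace G] {g g' : ℝ → G} (hab : a ≤ b)
    (hg : ∀ r ∈ Icc a b, HasDerivAt g (g' r) r) (hg' : ContinuousOn g' (Icc a b)) :
    ‖g a‖ₑ ≤ ‖g b‖ₑ + ∫⁻ r in Ioc a b, ‖g' r‖ₑ := by
  have ftc : ∫ r in Ioc a b, g' r = g b - g a := by
    rw [← intervalIntegral.integral_of_le hab]
    rw [← uIcc_of_le hab] at hg hg'
    exact intervalIntegral.integral_eq_sub_of_hasDerivAt hg hg'.intervalIntegrable
  calc ‖g a‖ₑ = ‖g b - ∫ r in Ioc a b, g' r‖ₑ := by rw [ftc, sub_sub_cancel]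
    _ ≤ ‖g b‖ₑ + ‖∫ r in Ioc a b, g' r‖ₑ := enorm_sub_le
    _ ≤ _ := by
      gcongr
      exact enorm_integral_le_lintegral_enorm _

theorem enorm_sq_le_add_log_mul_lintegral {G : Type*} [NormedAddCommGroup G]
    [NormedSpace ℝ G] [CompleteSpace G] {g g' : ℝ → G} (ha : 0 < a) (hab : a ≤ b)
    (hg : ∀ r ∈ Icc a b, HasDerivAt g (g' r) r) (hg' : ContinuousOn g' (Icc a b)) :
    ‖g a‖ₑ ^ 2 ≤ 2 * ‖g b‖ₑ ^ 2 + 2 * (ENNReal.ofReal (Real.log (b / a)) *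
      ∫⁻ r in Ioc a b, ENNReal.ofReal r * ‖g' r‖ₑ ^ 2) := by
  have measurable_deriv : AEMeasurable (fun r ↦ ‖g' r‖ₑ) (volume.restrict (Ioc a b)) :=
    ((hg'.mono Ioc_subset_Icc_self).aestronglyMeasurable measurableSet_Ioc).enorm
  calc ‖g a‖ₑ ^ 2 ≤ (‖g b‖ₑ + ∫⁻ r in Ioc a b, ‖g' r‖ₑ) ^ 2 :=
        pow_le_pow_left' (enorm_le_enorm_add_lintegral_enorm_deriv hab hg hg') 2
    _ ≤ _ := ennreal_add_sq_le _ _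
    _ ≤ _ := by
      gcongr
      exact sq_lintegral_Ioc_le_log_mul ha hab measurable_deriv

end Trace

/-- The density `|∇u|² + |u|²` of the squared `H¹(V)` norm, extended by zero outside `V`. -/
def sobolevDensity (u : E2 → ℂ) (V : Set E2) : E2 → ℝ≥0∞ :=
  V.indicator fun q ↦ ENNReal.ofReal (gradSq u q + ‖u q‖ ^ 2)

section SobolevDensity

variable {u : E2 → ℂ} {V : Set E2} {a b : ℝ} {p : E2}

theorem ofReal_gradSq_le_sobolevDensity (u : E2 → ℂ) {q : E2} (hq : q ∈ V) :
    ENNReal.ofReal (gradSq u q) ≤ sobolevDensity u V q := by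
  rw [sobolevDensity, indicator_of_mem hq]
  exact ENNReal.ofReal_le_ofReal (le_add_of_nonneg_right (sq_nonneg _))

theorem enorm_sq_le_sobolevDensity (u : E2 → ℂ) {q : E2} (hq : q ∈ V) :
    ‖u q‖ₑ ^ 2 ≤ sobolevDensity u V q := by
  rw [sobolevDensity, indicator_of_mem hq, ← ofReal_norm_sq]
  exact ENNReal.ofReal_le_ofReal (le_add_of_nonneg_left (gradSq_nonneg u q))

theorem measurable_sobolevDensity (hV : IsOpen V) (hu : ContDiffOn ℝ 1 u V) :
    Measurable (sobolevDensity u V) := by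
  classical
  have continuousOn_pd (i : Fin 2) : ContinuousOn (pd i u) V :=
    (hu.continuousOn_fderiv_of_isOpen hV le_rfl).clm_apply continuousOn_const
  have continuousOn_density : ContinuousOn (fun q ↦ gradSq u q + ‖u q‖ ^ 2) V :=
    (((continuousOn_pd 0).norm.pow 2).add ((continuousOn_pd 1).norm.pow 2)).add
      (hu.continuousOn.norm.pow 2)
  rw [sobolevDensity, ← piecewise_eq_indicator]
  exact (ENNReal.continuous_ofReal.comp_continuousOn continuousOn_density).measurable_piecewise
    continuousOn_const hV.measurableSet

theorem lintegral_sobolevDensity (hV : MeasurableSet V)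
    (hint : IntegrableOn (fun q ↦ gradSq u q + ‖u q‖ ^ 2) V) :
    ∫⁻ q, sobolevDensity u V q = ENNReal.ofReal (∫ q in V, (gradSq u q + ‖u q‖ ^ 2)) := by
  rw [sobolevDensity, lintegral_indicator hV, ofReal_integral_eq_lintegral_ofReal hint
    (.of_forall fun q ↦ add_nonneg (gradSq_nonneg u q) (sq_nonneg _))]

theorem dirichletEnergy_le_lintegral_sobolevDensity (u : E2 → ℂ) (hV : MeasurableSet V) :
    dirichletEnergy u V ≤ ∫⁻ q, sobolevDensity u V q :=
  (setLIntegral_mono' hV fun _ hq ↦ ofReal_gradSq_le_sobolevDensity u hq).trans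
    (setLIntegral_le_lintegral _ _)

theorem enorm_sq_comp_circ_le (hV : IsOpen V) (hu : ContDiffOn ℝ 1 u V) (ha : 0 < a)
    (hab : a ≤ b) (φ : ℝ) (hsub : ∀ r ∈ Icc a b, p + circ r φ ∈ V) :
    ‖u (p + circ a φ)‖ₑ ^ 2 ≤ 2 * sobolevDensity u V (p + circ b φ) +
      2 * (ENNReal.ofReal (Real.log (b / a)) *
        ∫⁻ r in Ioi 0, ENNReal.ofReal r * sobolevDensity u V (p + circ r φ)) := by
  have ray_deriv (r : ℝ) : HasDerivAt (fun r ↦ p + circ r φ) (circ 1 φ) r := by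
    rw [show (fun r ↦ p + circ r φ) = fun r ↦ p + r • circ 1 φ from
      funext fun r ↦ congrArg (p + ·) (circ_eq_smul r φ)]
    simpa using ((hasDerivAt_id r).smul_const (circ 1 φ)).const_add p
  have ray_continuous : Continuous fun r ↦ p + circ r φ :=
    continuous_iff_continuousAt.2 fun r ↦ (ray_deriv r).continuousAt
  have radial_deriv (r : ℝ) (hr : r ∈ Icc a b) : HasDerivAt (fun r ↦ u (p + circ r φ))
      (fderiv ℝ u (p + circ r φ) (circ 1 φ)) r :=
    ((hu.differentiableOn one_ne_zero).differentiableAt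
      (hV.mem_nhds (hsub r hr))).hasFDerivAt.comp_hasDerivAt r (ray_deriv r)
  have radial_deriv_continuous :
      ContinuousOn (fun r ↦ fderiv ℝ u (p + circ r φ) (circ 1 φ)) (Icc a b) :=
    ((hu.continuousOn_fderiv_of_isOpen hV le_rfl).comp ray_continuous.continuousOn
      hsub).clm_apply continuousOn_const
  refine (enorm_sq_le_add_log_mul_lintegral ha hab radial_deriv radial_deriv_continuous).trans ?_
  gcongr 2 * ?_ + 2 * (_ * ?_)
  · exact enorm_sq_le_sobolevDensity u (hsub b ⟨hab, le_rfl⟩)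
  refine (setLIntegral_mono' measurableSet_Ioc fun r hr ↦ ?_).trans
    (lintegral_mono_set fun r hr ↦ ha.trans hr.1)
  gcongr
  refine le_trans ?_ (ofReal_gradSq_le_sobolevDensity u (hsub r ⟨hr.1.le, hr.2⟩))
  rw [← ofReal_norm_sq]
  refine ENNReal.ofReal_le_ofReal ?_
  simpa [norm_circ] using norm_fderiv_apply_sq_le u (p + circ r φ) (circ 1 φ)

theorem angularIntegral_enorm_sq_le (hV : IsOpen V) (hu : ContDiffOn ℝ 1 u V) (ha : 0 < a)
    (hab : a ≤ b) (hsub : ∀ r ∈ Icc a b, ∀ φ, p + circ r φ ∈ V) :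
    angularIntegral (fun q ↦ ‖u q‖ₑ ^ 2) p a ≤ 2 * angularIntegral (sobolevDensity u V) p b +
      2 * (ENNReal.ofReal (Real.log (b / a)) * ∫⁻ q, sobolevDensity u V q) := by
  have density_measurable := measurable_sobolevDensity hV hu
  have weighted_measurable : Measurable fun z : ℝ × ℝ ↦
      ENNReal.ofReal z.1 * sobolevDensity u V (p + circ z.1 z.2) :=
    measurable_fst.ennreal_ofReal.mul (measurable_comp_add_circ density_measurable p)
  have circle_measurable := measurable_comp_add_circ_right density_measurable p b
  have ray_measurable : Measurable fun φ ↦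
      ∫⁻ r in Ioi 0, ENNReal.ofReal r * sobolevDensity u V (p + circ r φ) :=
    weighted_measurable.lintegral_prod_left'
  refine (lintegral_mono fun φ ↦ enorm_sq_comp_circ_le hV hu ha hab φ
    fun r hr ↦ hsub r hr φ).trans_eq ?_
  rw [lintegral_add_left (circle_measurable.const_mul 2), lintegral_const_mul _ circle_measurable,
    lintegral_const_mul _ (ray_measurable.const_mul _), lintegral_const_mul _ ray_measurable,
    lintegral_eq_lintegral_polar density_measurable p, lintegral_lintegral_swap]
  · rfl
  · exact (weighted_measurable.comp measurable_swap).aemeasurable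

end SobolevDensity

/-! ### Radial extension into a disc -/

/-- The radial projection of `x ≠ p` onto the sphere of radius `ϵ` around `p`. -/
def sphereProj {E : Type*} [NormedAddCommGroup E] [NormedSpace ℝ E] (p : E) (ϵ : ℝ) (x : E) : E :=
  p + (ϵ / ‖x - p‖) • (x - p)

/-- The function which on every ray from `p` is linear in the distance to `p` and agrees with `u`
on the sphere of radius `ϵ` around `p`. This is the paper's `v` inside that sphere. -/
def radialExtension {E G : Type*} [NormedAddCommGroup E] [NormedSpace ℝ E] [NormedAddCommGroup G]
    [NormedSpace ℝ G] (u : E → G) (p : E) (ϵ : ℝ) (x : E) : G :=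
  (‖x - p‖ / ϵ) • u (sphereProj p ϵ x)

section RadialDerivative

variable {E : Type*} [NormedAddCommGroup E] [InnerProductSpace ℝ E] {p x : E} {ϵ : ℝ}

theorem exists_hasFDerivAt_norm_sub (hx : x ≠ p) :
    ∃ N : E →L[ℝ] ℝ, HasFDerivAt (fun y ↦ ‖y - p‖) N x ∧ ‖N‖ ≤ 1 := by
  have differentiable : DifferentiableAt ℝ (fun y ↦ ‖y - p‖) x :=
    DifferentiableAt.norm ℝ (by fun_prop) (sub_ne_zero.2 hx)
  have lipschitz : LipschitzWith 1 fun y ↦ ‖y - p‖ := by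
    simpa only [dist_eq_norm] using LipschitzWith.dist_left p
  exact ⟨_, differentiable.hasFDerivAt, differentiable.hasFDerivAt.le_of_lipschitz lipschitz⟩

theorem exists_hasFDerivAt_sphereProj (hϵ : 0 ≤ ϵ) (hx : x ≠ p) :
    ∃ L : E →L[ℝ] E, HasFDerivAt (sphereProj p ϵ) L x ∧ ‖L‖ ≤ 2 * (ϵ / ‖x - p‖) := by
  obtain ⟨N, hN, hN₁⟩ := exists_hasFDerivAt_norm_sub hx
  have hr : 0 < ‖x - p‖ := norm_pos_iff.2 (sub_ne_zero.2 hx)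
  have scale_deriv := ((hasDerivAt_inv hr.ne').comp_hasFDerivAt x hN).const_mul ϵ
  refine ⟨_, (scale_deriv.smul ((hasFDerivAt_id x).sub_const p)).const_add p, ?_⟩
  refine ContinuousLinearMap.opNorm_le_bound _ (by positivity) fun w ↦ ?_
  have hNw : ‖N w‖ ≤ ‖w‖ := (N.le_of_opNorm_le hN₁ w).trans_eq (one_mul _)
  calc ‖(ϵ * ‖x - p‖⁻¹) • w + (ϵ * (-(‖x - p‖ ^ 2)⁻¹ * N w)) • (x - p)‖
      ≤ ϵ * ‖x - p‖⁻¹ * ‖w‖ + ϵ * ((‖x - p‖ ^ 2)⁻¹ * ‖N w‖) * ‖x - p‖ := by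
        refine (norm_add_le _ _).trans_eq ?_
        simp [norm_smul, abs_of_nonneg hϵ]
    _ ≤ ϵ * ‖x - p‖⁻¹ * ‖w‖ + ϵ * ((‖x - p‖ ^ 2)⁻¹ * ‖w‖) * ‖x - p‖ := by gcongr
    _ = 2 * (ϵ / ‖x - p‖) * ‖w‖ := by
        field_simp
        ring

theorem norm_fderiv_radialExtension_le {G : Type*} [NormedAddCommGroup G] [NormedSpace ℝ G]
    {u : E → G} (hϵ : 0 < ϵ) (hx : x ≠ p) (hu : DifferentiableAt ℝ u (sphereProj p ϵ x)) :
    ‖fderiv ℝ (radialExtension u p ϵ) x‖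
      ≤ ‖u (sphereProj p ϵ x)‖ / ϵ + 2 * ‖fderiv ℝ u (sphereProj p ϵ x)‖ := by
  obtain ⟨N, hN, hN₁⟩ := exists_hasFDerivAt_norm_sub hx
  obtain ⟨L, hL, hL₂⟩ := exists_hasFDerivAt_sphereProj hϵ.le hx
  have hr : 0 < ‖x - p‖ := norm_pos_iff.2 (sub_ne_zero.2 hx)
  have extension_deriv := (hN.mul_const ϵ⁻¹).smul (hu.hasFDerivAt.comp x hL)
  rw [show fderiv ℝ (radialExtension u p ϵ) x = _ from extension_deriv.fderiv]
  refine (norm_add_le _ _).trans ?_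
  rw [add_comm, norm_smul, ContinuousLinearMap.norm_smulRight_apply, norm_smul, norm_mul,
    norm_inv, norm_norm, Real.norm_of_nonneg hϵ.le]
  refine add_le_add ?_ ?_
  · rw [div_eq_inv_mul]
    exact mul_le_mul_of_nonneg_right (mul_le_of_le_one_right (by positivity) hN₁) (norm_nonneg _)
  · calc ‖x - p‖ * ϵ⁻¹ * ‖(fderiv ℝ u (sphereProj p ϵ x)).comp L‖
        ≤ ‖x - p‖ * ϵ⁻¹ * (‖fderiv ℝ u (sphereProj p ϵ x)‖ * (2 * (ϵ / ‖x - p‖))) := by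
          gcongr
          exact (ContinuousLinearMap.opNorm_comp_le _ _).trans (by gcongr)
      _ = 2 * ‖fderiv ℝ u (sphereProj p ϵ x)‖ := by field_simp

end RadialDerivative

section RadialExtension

variable {u : E2 → ℂ} {p : E2} {ϵ : ℝ}

theorem sphereProj_add_circ (p : E2) (ϵ : ℝ) {r : ℝ} (hr : 0 < r) (φ : ℝ) :
    sphereProj p ϵ (p + circ r φ) = p + circ ϵ φ := by
  rw [sphereProj, add_sub_cancel_left, norm_circ, abs_of_pos hr, circ_eq_smul r, smul_smul,
    div_mul_cancel₀ _ hr.ne', ← circ_eq_smul]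

theorem radialExtension_add_circ (u : E2 → ℂ) (p : E2) (ϵ : ℝ) {r : ℝ} (hr : 0 ≤ r) (φ : ℝ) :
    radialExtension u p ϵ (p + circ r φ) = (r / ϵ) • u (p + circ ϵ φ) := by
  rw [radialExtension, add_sub_cancel_left, norm_circ, abs_of_nonneg hr]
  rcases hr.eq_or_lt with rfl | hr
  · simp
  · rw [sphereProj_add_circ p ϵ hr]

theorem eqOn_ball_radialExtension {v : E2 → ℂ}
    (hv : ∀ r φ : ℝ, 0 ≤ r → r < ϵ → v (p + circ r φ) = (r / ϵ) • u (p + circ ϵ φ)) :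
    EqOn v (radialExtension u p ϵ) (ball p ϵ) := by
  intro x hx
  obtain ⟨φ, hφ⟩ := exists_circ_norm_eq (x - p)
  have x_eq : p + circ ‖x - p‖ φ = x := by rw [hφ, add_sub_cancel]
  rw [← x_eq, radialExtension_add_circ u p ϵ (norm_nonneg _)]
  exact hv _ φ (norm_nonneg _) (mem_ball_iff_norm.1 hx)

theorem gradSq_radialExtension_le (hϵ : 0 < ϵ) {r : ℝ} (hr : 0 < r) (φ : ℝ)
    (hu : DifferentiableAt ℝ u (p + circ ϵ φ)) :
    gradSq (radialExtension u p ϵ) (p + circ r φ)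
      ≤ 4 / ϵ ^ 2 * ‖u (p + circ ϵ φ)‖ ^ 2 + 16 * gradSq u (p + circ ϵ φ) := by
  have ne_center : p + circ r φ ≠ p := by
    rw [Ne, add_eq_left, ← norm_eq_zero, norm_circ, abs_eq_zero]
    exact hr.ne'
  have deriv_le := norm_fderiv_radialExtension_le (u := u) hϵ ne_center
  rw [sphereProj_add_circ p ϵ hr φ] at deriv_le
  calc gradSq (radialExtension u p ϵ) (p + circ r φ)
      ≤ 2 * (‖u (p + circ ϵ φ)‖ / ϵ + 2 * ‖fderiv ℝ u (p + circ ϵ φ)‖) ^ 2 := by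
        refine (gradSq_le_two_mul_norm_fderiv_sq _ _).trans ?_
        gcongr
        exact deriv_le hu
    _ ≤ 2 * (2 * ((‖u (p + circ ϵ φ)‖ / ϵ) ^ 2 + (2 * ‖fderiv ℝ u (p + circ ϵ φ)‖) ^ 2)) := by
        gcongr
        exact add_sq_le
    _ = 4 / ϵ ^ 2 * ‖u (p + circ ϵ φ)‖ ^ 2 + 16 * ‖fderiv ℝ u (p + circ ϵ φ)‖ ^ 2 := by
        field_simp
        ring
    _ ≤ _ := by
        gcongr
        exact norm_fderiv_sq_le_gradSq u _

theorem dirichletEnergy_ball_radialExtension_le (hϵ : 0 < ϵ)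
    (hu : ∀ φ, DifferentiableAt ℝ u (p + circ ϵ φ)) :
    dirichletEnergy (radialExtension u p ϵ) (ball p ϵ)
      ≤ 4 * angularIntegral (fun q ↦ ‖u q‖ₑ ^ 2) p ϵ + 16 * (ENNReal.ofReal ϵ ^ 2 *
        angularIntegral (fun q ↦ ENNReal.ofReal (gradSq u q)) p ϵ) := by
  have gradSq_measurable : Measurable fun φ ↦ ENNReal.ofReal (gradSq u (p + circ ϵ φ)) :=
    measurable_comp_add_circ_right (measurable_gradSq u).ennreal_ofReal p ϵ
  have circle_le (r : ℝ) (hr : r ∈ Ioo 0 ϵ) :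
      angularIntegral (fun q ↦ ENNReal.ofReal (gradSq (radialExtension u p ϵ) q)) p r
        ≤ ENNReal.ofReal (4 / ϵ ^ 2) * angularIntegral (fun q ↦ ‖u q‖ₑ ^ 2) p ϵ +
          16 * angularIntegral (fun q ↦ ENNReal.ofReal (gradSq u q)) p ϵ := by
    simp only [angularIntegral]
    rw [← lintegral_const_mul' _ _ ENNReal.ofReal_ne_top, ← lintegral_const_mul _ gradSq_measurable,
      ← lintegral_add_right _ (gradSq_measurable.const_mul 16)]
    refine lintegral_mono fun φ ↦ ?_
    refine (ENNReal.ofReal_le_ofReal (gradSq_radialExtension_le hϵ hr.1 φ (hu φ))).trans_eq ?_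
    rw [ENNReal.ofReal_add (by positivity) (mul_nonneg (by norm_num) (gradSq_nonneg _ _)),
      ENNReal.ofReal_mul (by positivity), ENNReal.ofReal_mul (by norm_num), ofReal_norm_sq,
      ENNReal.ofReal_ofNat]
  refine (setLIntegral_ball_le_of_angularIntegral_le (measurable_gradSq _).ennreal_ofReal p
    circle_le).trans_eq ?_
  rw [mul_add, ← mul_assoc, ← ENNReal.ofReal_pow hϵ.le, ← ENNReal.ofReal_mul (by positivity),
    mul_div_cancel₀ _ (by positivity), ENNReal.ofReal_ofNat, mul_left_comm]

end RadialExtension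

section EnergyOfExtension

variable {u : E2 → ℂ} {V : Set E2} {p : E2} {ρ ε : ℝ}

theorem add_circ_mem_annulus (p : E2) {a b r : ℝ} (hr₀ : 0 ≤ r) (har : a < r) (hrb : r < b)
    (φ : ℝ) : p + circ r φ ∈ ball p b \ closedBall p a := by
  simp only [Set.mem_sdiff, mem_ball, mem_closedBall, dist_self_add_left, norm_circ,
    abs_of_nonneg hr₀]
  exact ⟨hrb, har.not_ge⟩

theorem angularIntegral_enorm_sq_le_of_annulus_subset (hV : IsOpen V) (hu : ContDiffOn ℝ 1 u V)
    (hε : 0 < ε) {r : ℝ} (hεr : ε < r) (hrρ : r ≤ ρ)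
    (hsub : ball p (2 * ρ) \ closedBall p ε ⊆ V) :
    angularIntegral (fun q ↦ ‖u q‖ₑ ^ 2) p r
      ≤ ENNReal.ofReal (2 / ρ ^ 2 + 2 * Real.log (2 * ρ / ε)) * ∫⁻ q, sobolevDensity u V q := by
  have hr : 0 < r := hε.trans hεr
  have hρ : 0 < ρ := hr.trans_le hrρ
  obtain ⟨s, ⟨hρs, hsρ⟩, outer_le⟩ :=
    exists_sq_mul_angularIntegral_le (measurable_sobolevDensity hV hu) p hρ
  have outer_le' : angularIntegral (sobolevDensity u V) p s
      ≤ ENNReal.ofReal (1 / ρ ^ 2) * ∫⁻ q, sobolevDensity u V q := by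
    rw [one_div, ENNReal.ofReal_inv_of_pos (by positivity), ENNReal.ofReal_pow hρ.le,
      ← ENNReal.div_eq_inv_mul]
    refine (ENNReal.le_div_iff_mul_le (.inl ?_) (by simp)).2 (by rwa [mul_comm])
    simpa using hρ
  have log_le : Real.log (s / r) ≤ Real.log (2 * ρ / ε) := by
    gcongr
    exact div_pos (hρ.trans hρs) hr
  have log_nonneg : 0 ≤ Real.log (2 * ρ / ε) :=
    Real.log_nonneg ((one_le_div hε).2 (by linarith))
  refine (angularIntegral_enorm_sq_le hV hu hr (hrρ.trans hρs.le) fun t ht φ ↦ hsub <|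
    add_circ_mem_annulus p (hr.le.trans ht.1) (hεr.trans_le ht.1) (ht.2.trans_lt hsρ) φ).trans ?_
  calc 2 * angularIntegral (sobolevDensity u V) p s
        + 2 * (ENNReal.ofReal (Real.log (s / r)) * ∫⁻ q, sobolevDensity u V q)
      ≤ 2 * (ENNReal.ofReal (1 / ρ ^ 2) * ∫⁻ q, sobolevDensity u V q)
        + 2 * (ENNReal.ofReal (Real.log (2 * ρ / ε)) * ∫⁻ q, sobolevDensity u V q) := by gcongr
    _ = _ := by
      rw [ENNReal.ofReal_add (by positivity) (by positivity), div_eq_mul_one_div 2 (ρ ^ 2),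
        ENNReal.ofReal_mul zero_le_two, ENNReal.ofReal_mul zero_le_two, ENNReal.ofReal_ofNat]
      ring

theorem exists_dirichletEnergy_radialExtension_le_log (hV : IsOpen V) (hu : ContDiffOn ℝ 1 u V)
    (hε : 0 < ε) (hερ : 2 * ε ≤ ρ) (hsub : ball p (2 * ρ) \ closedBall p ε ⊆ V) :
    ∃ ϵ ∈ Ioo ε (2 * ε), dirichletEnergy (radialExtension u p ϵ) (ball p ϵ)
      ≤ ENNReal.ofReal (8 / ρ ^ 2 + 64 + 8 * Real.log (2 * ρ / ε)) *
        ∫⁻ q, sobolevDensity u V q := by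
  obtain ⟨ϵ, ⟨hεϵ, hϵε⟩, circle_le⟩ :=
    exists_sq_mul_angularIntegral_le (measurable_sobolevDensity hV hu) p hε
  have hϵ : 0 < ϵ := hε.trans hεϵ
  have circle_subset (φ : ℝ) : p + circ ϵ φ ∈ V :=
    hsub (add_circ_mem_annulus p hϵ.le hεϵ (by linarith) φ)
  have log_nonneg : 0 ≤ Real.log (2 * ρ / ε) :=
    Real.log_nonneg ((one_le_div hε).2 (by linarith))
  have gradient_le : ENNReal.ofReal ϵ ^ 2 *
      angularIntegral (fun q ↦ ENNReal.ofReal (gradSq u q)) p ϵ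
        ≤ 4 * ∫⁻ q, sobolevDensity u V q :=
    calc _ ≤ ENNReal.ofReal (2 * ε) ^ 2 * angularIntegral (sobolevDensity u V) p ϵ := by
          gcongr
          exact lintegral_mono fun φ ↦ ofReal_gradSq_le_sobolevDensity u (circle_subset φ)
      _ = 4 * (ENNReal.ofReal ε ^ 2 * angularIntegral (sobolevDensity u V) p ϵ) := by
          rw [ENNReal.ofReal_mul zero_le_two, ENNReal.ofReal_ofNat]
          ring
      _ ≤ _ := by gcongr
  refine ⟨ϵ, ⟨hεϵ, hϵε⟩, (dirichletEnergy_ball_radialExtension_le hϵ fun φ ↦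
    (hu.differentiableOn one_ne_zero).differentiableAt
      (hV.mem_nhds (circle_subset φ))).trans ?_⟩
  calc _ ≤ 4 * (ENNReal.ofReal (2 / ρ ^ 2 + 2 * Real.log (2 * ρ / ε)) *
          ∫⁻ q, sobolevDensity u V q) + 16 * (4 * ∫⁻ q, sobolevDensity u V q) := by
        gcongr
        exact angularIntegral_enorm_sq_le_of_annulus_subset hV hu hε hεϵ (by linarith) hsub
    _ = (ENNReal.ofReal (4 * (2 / ρ ^ 2 + 2 * Real.log (2 * ρ / ε))) + ENNReal.ofReal 64) *
          ∫⁻ q, sobolevDensity u V q := by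
        rw [ENNReal.ofReal_mul (by norm_num), ENNReal.ofReal_ofNat, ENNReal.ofReal_ofNat]
        ring
    _ = _ := by
        rw [← ENNReal.ofReal_add (by positivity) (by norm_num)]
        ring_nf

theorem add_mul_log_div_le_mul_rpow_neg {c k R δ : ℝ} (hc : 0 ≤ c) (hk : 0 ≤ k) (hR : 0 ≤ R)
    (hδ : 0 < δ) (hε : 0 < ε) (hε₁ : ε ≤ 1) :
    c + k * Real.log (R / ε) ≤ (c + k * (R ^ δ / δ)) * ε ^ (-δ) := by
  have one_le : 1 ≤ ε ^ (-δ) :=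
    Real.one_le_rpow_of_pos_of_le_one_of_nonpos hε hε₁ (neg_nonpos.2 hδ.le)
  have log_le : Real.log (R / ε) ≤ R ^ δ / δ * ε ^ (-δ) :=
    (Real.log_le_rpow_div (by positivity) hδ).trans_eq <| by
      rw [Real.div_rpow hR hε.le, Real.rpow_neg hε.le]
      ring
  nlinarith [mul_le_mul_of_nonneg_left one_le hc, mul_le_mul_of_nonneg_left log_le hk]

theorem exists_dirichletEnergy_radialExtension_add_le_rpow (p : E2) (hρ : 0 < ρ) {δ : ℝ}
    (hδ : 0 < δ) :
    ∃ B : ℝ, 0 ≤ B ∧ ∀ ε : ℝ, 0 < ε → ε ≤ 1 → 2 * ε ≤ ρ → ∀ V : Set E2, IsOpen V →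
      ball p (2 * ρ) \ closedBall p ε ⊆ V → ∀ u : E2 → ℂ, ContDiffOn ℝ 1 u V →
      ∃ ϵ ∈ Ioo ε (2 * ε),
        dirichletEnergy (radialExtension u p ϵ) (ball p ϵ) + dirichletEnergy u V
          ≤ ENNReal.ofReal (B * ε ^ (-δ)) * ∫⁻ q, sobolevDensity u V q := by
  refine ⟨8 / ρ ^ 2 + 65 + 8 * ((2 * ρ) ^ δ / δ), by positivity,
    fun ε hε hε₁ hερ V hV hsub u hu ↦ ?_⟩
  obtain ⟨ϵ, hϵ, extension_le⟩ := exists_dirichletEnergy_radialExtension_le_log hV hu hε hερ hsub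
  have log_nonneg : 0 ≤ Real.log (2 * ρ / ε) :=
    Real.log_nonneg ((one_le_div hε).2 (by linarith))
  refine ⟨ϵ, hϵ, (add_le_add extension_le
    (dirichletEnergy_le_lintegral_sobolevDensity u hV.measurableSet)).trans ?_⟩
  rw [← add_one_mul, ← ENNReal.ofReal_one, ← ENNReal.ofReal_add (by positivity) zero_le_one]
  gcongr
  linarith [add_mul_log_div_le_mul_rpow_neg (c := 8 / ρ ^ 2 + 65) (k := 8) (R := 2 * ρ)
    (by positivity) (by norm_num) (by positivity) hδ hε hε₁]

end EnergyOfExtension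

/-! ### The form estimate -/

section Form

variable {f u v : E2 → ℂ} {S : Set E2} {p : E2} {r : ℝ}

theorem norm_sub_sq_le_two_mul_add (z w : ℂ) : ‖z - w‖ ^ 2 ≤ 2 * (‖z‖ ^ 2 + ‖w‖ ^ 2) :=
  (pow_le_pow_left₀ (norm_nonneg _) (norm_sub_le z w) 2).trans add_sq_le

theorem norm_pd_mul_conj_sub_add_le (f u v : E2 → ℂ) (q : E2) :
    ‖pd 0 f q * conj (pd 0 v q - pd 0 u q) + pd 1 f q * conj (pd 1 v q - pd 1 u q)‖
      ≤ √(gradSq f q) * √(2 * (gradSq v q + gradSq u q)) := by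
  rw [← Real.sqrt_mul (gradSq_nonneg f q)]
  refine Real.le_sqrt_of_sq_le ?_
  set x := ‖pd 0 v q - pd 0 u q‖
  set y := ‖pd 1 v q - pd 1 u q‖
  calc _ ≤ (‖pd 0 f q‖ * x + ‖pd 1 f q‖ * y) ^ 2 := by
        gcongr
        refine (norm_add_le _ _).trans_eq ?_
        rw [norm_mul, norm_mul, RCLike.norm_conj, RCLike.norm_conj]
    _ ≤ gradSq f q * (x ^ 2 + y ^ 2) := by
        rw [gradSq]
        nlinarith [sq_nonneg (‖pd 0 f q‖ * y - ‖pd 1 f q‖ * x)]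
    _ ≤ gradSq f q * (2 * (gradSq v q + gradSq u q)) := by
        refine mul_le_mul_of_nonneg_left ?_ (gradSq_nonneg f q)
        simp only [gradSq]
        linarith [norm_sub_sq_le_two_mul_add (pd 0 v q) (pd 0 u q),
          norm_sub_sq_le_two_mul_add (pd 1 v q) (pd 1 u q)]

theorem enorm_setIntegral_pd_mul_conj_sub_le (hS : MeasurableSet S)
    (hvu : ∀ q ∈ S \ closedBall p r, v =ᶠ[𝓝 q] u) :
    ‖∫ q in S, (pd 0 f q * conj (pd 0 v q - pd 0 u q)
        + pd 1 f q * conj (pd 1 v q - pd 1 u q))‖ₑ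
      ≤ ∫⁻ q in ball p r ∩ S, ENNReal.ofReal √(gradSq f q) *
        ENNReal.ofReal √(2 * (gradSq v q + gradSq u q)) := by
  have ae_notMem_sphere : ∀ᵐ q ∂(volume : Measure E2), q ∉ sphere p r :=
    measure_eq_zero_iff_ae_notMem.1 (Measure.addHaar_sphere volume p r)
  refine (enorm_integral_le_lintegral_enorm _).trans ?_
  rw [← Measure.restrict_restrict measurableSet_ball, ← lintegral_indicator measurableSet_ball]
  refine lintegral_mono_ae ((ae_restrict_iff' hS).2 ?_)
  filter_upwards [ae_notMem_sphere] with q hq hqS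
  by_cases hball : q ∈ ball p r
  · rw [indicator_of_mem hball, ← ENNReal.ofReal_mul (Real.sqrt_nonneg _), ← ofReal_norm]
    exact ENNReal.ofReal_le_ofReal (norm_pd_mul_conj_sub_add_le f u v q)
  · have hout : q ∉ closedBall p r := by
      rw [← ball_union_sphere]
      exact fun h ↦ h.elim hball hq
    have near := hvu q ⟨hqS, hout⟩
    simp [(pd_eventuallyEq near _).eq_of_nhds]

theorem enorm_setIntegral_pd_mul_conj_sub_sq_le (hS : MeasurableSet S)
    (hvu : ∀ q ∈ S \ closedBall p r, v =ᶠ[𝓝 q] u) :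
    ‖∫ q in S, (pd 0 f q * conj (pd 0 v q - pd 0 u q)
        + pd 1 f q * conj (pd 1 v q - pd 1 u q))‖ₑ ^ 2
      ≤ dirichletEnergy f (ball p r) *
        (2 * (dirichletEnergy v (ball p r) + dirichletEnergy u S)) := by
  have hf := measurable_gradSq f
  have hv := measurable_gradSq v
  have hu := measurable_gradSq u
  refine (pow_le_pow_left' (enorm_setIntegral_pd_mul_conj_sub_le hS hvu) 2).trans
    ((sq_lintegral_mul_le (by fun_prop) (by fun_prop)).trans (mul_le_mul' ?_ ?_))
  · simp only [ofReal_sqrt_sq (gradSq_nonneg f _)]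
    exact lintegral_mono_set inter_subset_left
  · have sum_nonneg (q : E2) : 0 ≤ gradSq v q + gradSq u q :=
      add_nonneg (gradSq_nonneg v q) (gradSq_nonneg u q)
    simp only [ofReal_sqrt_sq (mul_nonneg zero_le_two (sum_nonneg _)),
      ENNReal.ofReal_mul zero_le_two, ENNReal.ofReal_ofNat,
      ENNReal.ofReal_add (gradSq_nonneg v _) (gradSq_nonneg u _)]
    rw [lintegral_const_mul _ (by fun_prop), lintegral_add_left (by fun_prop)]
    gcongr
    · exact lintegral_mono_set inter_subset_left
    · exact lintegral_mono_set inter_subset_right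

end Form

theorem self_mul_rpow_neg_one_sub_two_mul {ε : ℝ} (hε : 0 < ε) (s : ℝ) :
    ε * ε ^ (-(1 - 2 * s)) = (ε ^ s) ^ 2 := by
  nth_rewrite 1 [← Real.rpow_one ε]
  rw [← Real.rpow_add hε, ← Real.rpow_mul_natCast hε.le]
  congr 1
  push_cast
  ring

theorem norm_le_of_enorm_sq_le {z : ℂ} {C : ℝ≥0∞} (hC : C ≠ ∞) {B ε ϵ s A M : ℝ} (hB : 0 ≤ B)
    (hε : 0 < ε) (hϵ : ϵ ≤ 2 * ε) (hA : 0 ≤ A) (hM : 0 ≤ M)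
    (hz : ‖z‖ₑ ^ 2 ≤ C * ENNReal.ofReal ϵ * ENNReal.ofReal A *
      (2 * (ENNReal.ofReal (B * ε ^ (-(1 - 2 * s))) * ENNReal.ofReal M))) :
    ‖z‖ ≤ √(4 * C.toReal * B) * ε ^ s * √A * √M := by
  lift C to ℝ≥0 using hC
  have sq_le : ENNReal.ofReal (‖z‖ ^ 2)
      ≤ ENNReal.ofReal (C * (2 * ε) * A * (2 * (B * ε ^ (-(1 - 2 * s)) * M))) := by
    rw [ofReal_norm_sq, ENNReal.ofReal_mul (by positivity), ENNReal.ofReal_mul (by positivity),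
      ENNReal.ofReal_mul (by positivity),
      ENNReal.ofReal_mul (q := B * ε ^ (-(1 - 2 * s)) * M) zero_le_two,
      ENNReal.ofReal_mul (q := M) (by positivity), ENNReal.ofReal_coe_nnreal, ENNReal.ofReal_ofNat]
    exact hz.trans (by gcongr)
  refine abs_le_of_sq_le_sq' ?_ (by positivity) |>.2
  calc ‖z‖ ^ 2 ≤ C * (2 * ε) * A * (2 * (B * ε ^ (-(1 - 2 * s)) * M)) :=
        (ENNReal.ofReal_le_ofReal_iff (by positivity)).1 sq_le
    _ = 4 * C * B * (ε * ε ^ (-(1 - 2 * s))) * A * M := by ring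
    _ = (√(4 * C * B) * ε ^ s * √A * √M) ^ 2 := by
        rw [self_mul_rpow_neg_one_sub_two_mul hε, mul_pow, mul_pow, mul_pow,
          Real.sq_sqrt (by positivity), Real.sq_sqrt hA, Real.sq_sqrt hM]

theorem sesquilinear_form_estimate_general {Ω : Set E2} (hΩ : IsOpen Ω) {p : E2} (hp : p ∈ Ω)
    {s : ℝ} (hs : s < 1 / 2) :
    ∃ C > 0, ∃ ε₀ > 0, ∀ ε : ℝ, 0 < ε → ε < ε₀ →
      ∀ K : Set E2, IsClosed K → K ⊆ closedBall p ε →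
      ∀ u : E2 → ℂ, ContDiffOn ℝ 1 u (Ω \ K) →
      IntegrableOn (fun q ↦ gradSq u q + ‖u q‖ ^ 2) (Ω \ K) →
      ∃ ϵ ∈ Ioo ε (2 * ε), ∀ v : E2 → ℂ, EqOn v u (Ω \ ball p ϵ) →
      EqOn v (radialExtension u p ϵ) (ball p ϵ) →
      ∀ f : E2 → ℂ, ContDiffOn ℝ 2 f Ω → IntegrableOn (fun q ↦ ‖f q‖ ^ 2) Ω →
      IntegrableOn (fun q ↦ ‖lap f q‖ ^ 2) Ω → (∫ q in Ω, lap f q * conj (f q)).re ≤ 0 →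
      ‖∫ q in Ω \ K, (pd 0 f q * conj (pd 0 v q - pd 0 u q)
          + pd 1 f q * conj (pd 1 v q - pd 1 u q))‖
        ≤ C * ε ^ s * √(∫ q in Ω, ‖-lap f q + f q‖ ^ 2)
          * √(∫ q in Ω \ K, (gradSq u q + ‖u q‖ ^ 2)) := by
  obtain ⟨R, hR, ball_subset⟩ := nhds_basis_closedBall.mem_iff.1 (hΩ.mem_nhds hp)
  obtain ⟨ρ, hρ, rfl⟩ : ∃ ρ > 0, 5 * ρ = R := ⟨R / 5, by positivity, by ring⟩
  obtain ⟨A, hA, energy_f_le⟩ := exists_dirichletEnergy_ball_le hΩ hρ ball_subset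
  obtain ⟨B, hB, energy_v_le⟩ := exists_dirichletEnergy_radialExtension_add_le_rpow p hρ
    (by linarith : 0 < 1 - 2 * s)
  refine ⟨√(4 * A.toReal * B) + 1, by positivity, min 1 (ρ / 2), by positivity,
    fun ε hε hε₀ K hK hKε u hu hint ↦ ?_⟩
  obtain ⟨hε₁, hερ⟩ := lt_min_iff.1 hε₀
  have hV : IsOpen (Ω \ K) := hΩ.sdiff hK
  have annulus_subset : ball p (2 * ρ) \ closedBall p ε ⊆ Ω \ K :=
    sdiff_subset_sdiff (ball_subset_closedBall.trans
      ((closedBall_subset_closedBall (by linarith)).trans ball_subset)) hKε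
  obtain ⟨ϵ, hϵ, energy_le⟩ :=
    energy_v_le ε hε hε₁.le (by linarith) (Ω \ K) hV annulus_subset u hu
  refine ⟨ϵ, hϵ, fun v hv_out hv_in f hf hf₀ hf₂ hre ↦ ?_⟩
  have near_outside (q : E2) (hq : q ∈ (Ω \ K) \ closedBall p ϵ) : v =ᶠ[𝓝 q] u :=
    (hv_out.mono (sdiff_subset_sdiff_right ball_subset_closedBall)).eventuallyEq_of_mem
      ((hΩ.sdiff isClosed_closedBall).mem_nhds ⟨hq.1.1, hq.2⟩)
  have form_le := enorm_setIntegral_pd_mul_conj_sub_sq_le (f := f) hV.measurableSet near_outside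
  rw [dirichletEnergy_congr measurableSet_ball fun q hq ↦
    hv_in.eventuallyEq_of_mem (isOpen_ball.mem_nhds hq)] at form_le
  rw [lintegral_sobolevDensity hV.measurableSet hint] at energy_le
  refine (norm_le_of_enorm_sq_le hA hB hε hϵ.2.le (integral_nonneg fun q ↦ sq_nonneg _)
    (integral_nonneg fun q ↦ add_nonneg (gradSq_nonneg u q) (sq_nonneg _))
    (form_le.trans (mul_le_mul' (energy_f_le f hf hf₀ hf₂ hre ϵ (hε.trans hϵ.1)
      (by linarith [hϵ.2])) (mul_le_mul_right energy_le 2)))).trans ?_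
  gcongr
  exact le_add_of_nonneg_right zero_le_one

/-- the estimate for condition (2.7), Step 2 of the proof of
Theorem 3.1. Let `Ω ⊆ ℝ²` be a bounded open set all of whose vertical and horizontal
sections are intervals, and fix a point `p = (p₁, p₂) ∈ Ω`. There exist `C > 0` and
`ε₀ > 0` such that for every `ε ∈ (0, ε₀)`, every compact `K ⊆ B̄_ε(p)` of Lebesgue
measure zero with `Ω ∖ K` satisfying property* and `B̄_{2ε}(p) ⊆ Ω`, and every `C¹`
function `u` on `Ω ∖ K` with finite `H¹` norm, there is `ϵ ∈ (ε, 2ε)` such that, with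
`v` equal to `u` on `Ω ∖ B_ϵ(p)` and to the radially linear extension on `B_ϵ(p)`,
every `f ∈ C²(Ω)` with `f`, `|∇f|`, `Δf` square-integrable and
`Re ∫_Ω (Δf)·conj(f) ≤ 0` satisfies
`|∫_{Ω∖K} ∇f · conj(∇v − ∇u)| ≤ C ε^{1/6} (∫_Ω |−Δf+f|²)^{1/2} ‖u‖₁`. -/
theorem sesquilinear_form_estimate (Ω : Set E2) (hΩo : IsOpen Ω)
    (hΩb : Bornology.IsBounded Ω)
    (hvert : ∀ x : ℝ, ({z : ℝ | pt x z ∈ Ω}).OrdConnected)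
    (hhorz : ∀ y : ℝ, ({z : ℝ | pt z y ∈ Ω}).OrdConnected)
    (p₁ p₂ : ℝ) (hp : pt p₁ p₂ ∈ Ω) :
    ∃ C > 0, ∃ ε₀ > 0, ∀ ε : ℝ, 0 < ε → ε < ε₀ →
      ∀ K : Set E2, IsCompact K → K ⊆ Metric.closedBall (pt p₁ p₂) ε → volume K = 0 →
      (∀ x₀ y₀ : ℝ, pt x₀ y₀ ∈ Ω \ K →
        (∀ z : ℝ, pt x₀ z ∉ K) ∨ (∀ z : ℝ, pt z y₀ ∉ K)) →
      Metric.closedBall (pt p₁ p₂) (2 * ε) ⊆ Ω →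
      ∀ u : E2 → ℂ, ContDiffOn ℝ 1 u (Ω \ K) →
      IntegrableOn (fun q => gradSq u q + ‖u q‖ ^ 2) (Ω \ K) →
      ∃ ϵ ∈ Set.Ioo ε (2 * ε), ∀ v : E2 → ℂ,
      (∀ q ∈ Ω \ Metric.ball (pt p₁ p₂) ϵ, v q = u q) →
      (∀ r φ : ℝ, 0 ≤ r → r < ϵ →
        v (pt (p₁ + r * Real.cos φ) (p₂ + r * Real.sin φ))
          = (r / ϵ : ℝ) * u (pt (p₁ + ϵ * Real.cos φ) (p₂ + ϵ * Real.sin φ))) →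
      ∀ f : E2 → ℂ, ContDiffOn ℝ 2 f Ω →
      IntegrableOn (fun q => ‖f q‖ ^ 2) Ω →
      IntegrableOn (fun q => gradSq f q) Ω →
      IntegrableOn (fun q => ‖lap f q‖ ^ 2) Ω →
      (∫ q in Ω, lap f q * (starRingEnd ℂ) (f q)).re ≤ 0 →
      ‖∫ q in Ω \ K,
          (pd 0 f q * (starRingEnd ℂ) (pd 0 v q - pd 0 u q)
            + pd 1 f q * (starRingEnd ℂ) (pd 1 v q - pd 1 u q))‖
        ≤ C * ε ^ ((1:ℝ)/6)
            * Real.sqrt (∫ q in Ω, ‖-lap f q + f q‖ ^ 2)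
            * Real.sqrt (∫ q in Ω \ K, (gradSq u q + ‖u q‖ ^ 2)) := by
  obtain ⟨C, hC, ε₀, hε₀, estimate⟩ :=
    sesquilinear_form_estimate_general hΩo hp (by norm_num : (1 : ℝ) / 6 < 1 / 2)
  refine ⟨C, hC, ε₀, hε₀, fun ε hε hεε₀ K hK hKε _ _ _ u hu hint ↦ ?_⟩
  obtain ⟨ϵ, hϵ, form_le⟩ := estimate ε hε hεε₀ K hK.isClosed hKε u hu hint
  refine ⟨ϵ, hϵ, fun v hv_out hv_in f hf hf₀ _ hf₂ hre ↦
    form_le v hv_out (eqOn_ball_radialExtension fun r φ hr hrϵ ↦ ?_) f hf hf₀ hf₂ hre⟩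
  simpa only [pt_add_mul_cos_add_mul_sin, Complex.real_smul] using hv_in r φ hr hrϵ
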